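/- arXiv:1804.10573 — 2 statements merged into one kernel-verified Lean document; each statement's English description precedes it below -/
import Mathlib

section
/- If ν is not a monomial, then for any r ∈ (−1,1) and any q, q_1, q_2 ∈ (0,1], the 4×4 matrix Σ_{U,X}(r,q_1,q_2) and the 2×2 matrix Σ_q are invertible, and hence strictly positive definite. -/
open MeasureTheory ProbabilityTheory Real Filter Set Matrix
open scoped ENNReal

noncomputable section

namespace SpinGlass


/-- Coefficient decay: `limsup p⁻¹ log γ_p < 0`. -/
def GammaDecay (γ : ℕ → ℝ) : Prop :=
  (∀ p, 0 ≤ γ p) ∧ ∃ ρ : ℝ, 0 < ρ ∧ ρ < 1 ∧ ∀ᶠ p in atTop, γ p ≤ ρ ^ p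

/-- ν(x) = Σ_{p≥2} γ_p² xᵖ. -/
def nuF (γ : ℕ → ℝ) (x : ℝ) : ℝ := ∑' p : ℕ, if 2 ≤ p then γ p ^ 2 * x ^ p else 0

/-- ν′(x), termwise. -/
def nuD1 (γ : ℕ → ℝ) (x : ℝ) : ℝ :=
  ∑' p : ℕ, if 2 ≤ p then γ p ^ 2 * p * x ^ (p - 1) else 0

/-- ν″(x), termwise. -/
def nuD2 (γ : ℕ → ℝ) (x : ℝ) : ℝ :=
  ∑' p : ℕ, if 2 ≤ p then γ p ^ 2 * p * ((p : ℝ) - 1) * x ^ (p - 2) else 0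

/-- ν is mixed (not a monomial). -/
def Mixed (γ : ℕ → ℝ) : Prop :=
  ∃ p q : ℕ, 2 ≤ p ∧ 2 ≤ q ∧ p ≠ q ∧ γ p ≠ 0 ∧ γ q ≠ 0

/-- The logarithmic potential Ω of the semicircle law. -/
def Omega (x : ℝ) : ℝ :=
  if |x| ≤ 2 then x ^ 2 / 4 - 1 / 2
  else x ^ 2 / 4 - 1 / 2 -
    (|x| / 4 * Real.sqrt (x ^ 2 - 4) - Real.log (Real.sqrt (x ^ 2 / 4 - 1) + |x| / 2))

/-- The 2×2 covariance matrix Σ_q. -/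
def SigmaQ (γ : ℕ → ℝ) (q : ℝ) : Matrix (Fin 2) (Fin 2) ℝ :=
  !![nuF γ (q ^ 2), q ^ 2 * nuD1 γ (q ^ 2);
     q ^ 2 * nuD1 γ (q ^ 2), q ^ 4 * nuD2 γ (q ^ 2) + q ^ 2 * nuD1 γ (q ^ 2)]

/-- The complexity function Θ_{ν,q}(u,x). -/
def Theta (γ : ℕ → ℝ) (q u x : ℝ) : ℝ :=
  1 / 2 + 1 / 2 * Real.log (q ^ 2 * nuD2 γ (q ^ 2) / nuD1 γ (q ^ 2))
    - 1 / 2 * (![u, x] ⬝ᵥ ((SigmaQ γ q)⁻¹ *ᵥ ![u, x]))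
    + Omega (x / (q * Real.sqrt (nuD2 γ (q ^ 2))))

/-- −E₀(ν) is the minimal E with sup_x Θ_{ν,1}(E,x) = 0. -/
def E0 (γ : ℕ → ℝ) : ℝ := - sInf {E : ℝ | (⨆ x : ℝ, Theta γ 1 E x) = 0}

/-- −x₀(ν) is the (unique) maximizer of x ↦ Θ_{ν,1}(−E₀(ν),x). -/
def x0 (γ : ℕ → ℝ) : ℝ :=
  - sSup {x : ℝ | ∀ y : ℝ, Theta γ 1 (-(E0 γ)) y ≤ Theta γ 1 (-(E0 γ)) x}

/-- The coefficients of ν_q(x) = Σ γ_p² q^{2p} xᵖ. -/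
def gammaScale (γ : ℕ → ℝ) (q : ℝ) : ℕ → ℝ := fun p => γ p * q ^ p

def E0q (γ : ℕ → ℝ) (q : ℝ) : ℝ := E0 (gammaScale γ q)

def x0q (γ : ℕ → ℝ) (q : ℝ) : ℝ := q⁻¹ * x0 (gammaScale γ q)

/-- d(r,q₁,q₂) = rν′(q₁q₂r) − q₁q₂ν″(q₁q₂r)(1−r²). -/
def dA (γ : ℕ → ℝ) (r q1 q2 : ℝ) : ℝ :=
  r * nuD1 γ (q1 * q2 * r) - q1 * q2 * nuD2 γ (q1 * q2 * r) * (1 - r ^ 2)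

def a2 (γ : ℕ → ℝ) (r q1 q2 : ℝ) : ℝ :=
  nuD1 γ (q2 ^ 2) / (nuD1 γ (q1 ^ 2) * nuD1 γ (q2 ^ 2) - dA γ r q1 q2 ^ 2)

def a4 (γ : ℕ → ℝ) (r q1 q2 : ℝ) : ℝ :=
  -dA γ r q1 q2 / (nuD1 γ (q1 ^ 2) * nuD1 γ (q2 ^ 2) - dA γ r q1 q2 ^ 2)

/-- υ(r,q₁,q₂) = q₁q₂rν″(q₁q₂r) + ν′(q₁q₂r). -/
def ups (γ : ℕ → ℝ) (r q1 q2 : ℝ) : ℝ :=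
  q1 * q2 * r * nuD2 γ (q1 * q2 * r) + nuD1 γ (q1 * q2 * r)

def SigmaU (γ : ℕ → ℝ) (r q1 q2 : ℝ) : Matrix (Fin 2) (Fin 2) ℝ :=
  !![nuF γ (q1 ^ 2) - q1 ^ 2 * a2 γ r q2 q1 * nuD1 γ (q1 * q2 * r) ^ 2 * (1 - r ^ 2),
     nuF γ (q1 * q2 * r) + q1 * q2 * a4 γ r q1 q2 * nuD1 γ (q1 * q2 * r) ^ 2 * (1 - r ^ 2);
     nuF γ (q1 * q2 * r) + q1 * q2 * a4 γ r q1 q2 * nuD1 γ (q1 * q2 * r) ^ 2 * (1 - r ^ 2),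
     nuF γ (q2 ^ 2) - q2 ^ 2 * a2 γ r q1 q2 * nuD1 γ (q1 * q2 * r) ^ 2 * (1 - r ^ 2)]

def SigmaX (γ : ℕ → ℝ) (r q1 q2 : ℝ) : Matrix (Fin 2) (Fin 2) ℝ :=
  !![q1 ^ 2 * nuD2 γ (q1 ^ 2) + nuD1 γ (q1 ^ 2)
        - ups γ r q1 q2 ^ 2 * (1 - r ^ 2) * a2 γ r q2 q1,
     q1 * q2 * r ^ 2 * nuD2 γ (q1 * q2 * r) + r * nuD1 γ (q1 * q2 * r)
        + ups γ r q1 q2 ^ 2 * (1 - r ^ 2) * a4 γ r q1 q2;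
     q1 * q2 * r ^ 2 * nuD2 γ (q1 * q2 * r) + r * nuD1 γ (q1 * q2 * r)
        + ups γ r q1 q2 ^ 2 * (1 - r ^ 2) * a4 γ r q1 q2,
     q2 ^ 2 * nuD2 γ (q2 ^ 2) + nuD1 γ (q2 ^ 2)
        - ups γ r q1 q2 ^ 2 * (1 - r ^ 2) * a2 γ r q1 q2]

def SigmaB (γ : ℕ → ℝ) (r q1 q2 : ℝ) : Matrix (Fin 2) (Fin 2) ℝ :=
  !![q1 * nuD1 γ (q1 ^ 2)
        - q1 * (1 - r ^ 2) * nuD1 γ (q1 * q2 * r) * ups γ r q1 q2 * a2 γ r q2 q1,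
     q1 * r * nuD1 γ (q1 * q2 * r)
        + q1 * (1 - r ^ 2) * nuD1 γ (q1 * q2 * r) * ups γ r q1 q2 * a4 γ r q1 q2;
     q2 * r * nuD1 γ (q1 * q2 * r)
        + q2 * (1 - r ^ 2) * nuD1 γ (q1 * q2 * r) * ups γ r q2 q1 * a4 γ r q2 q1,
     q2 * nuD1 γ (q2 ^ 2)
        - q2 * (1 - r ^ 2) * nuD1 γ (q1 * q2 * r) * ups γ r q2 q1 * a2 γ r q1 q2]

/-- The 4×4 covariance matrix Σ_{U,X}(r,q₁,q₂), as a block matrix. -/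
def SigmaUX (γ : ℕ → ℝ) (r q1 q2 : ℝ) :
    Matrix (Fin 2 ⊕ Fin 2) (Fin 2 ⊕ Fin 2) ℝ :=
  Matrix.fromBlocks (SigmaU γ r q1 q2) (SigmaB γ r q1 q2)
    (SigmaB γ r q1 q2)ᵀ (SigmaX γ r q1 q2)

/-- The pair complexity Ψ_{ν,q₁,q₂}(r,u₁,u₂,x₁,x₂). -/
def Psi (γ : ℕ → ℝ) (q1 q2 r u1 u2 x1 x2 : ℝ) : ℝ :=
  1 + 1 / 2 * Real.log ((1 - r ^ 2) *
        (q1 ^ 2 * q2 ^ 2 * nuD2 γ (q1 ^ 2) * nuD2 γ (q2 ^ 2)) /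
        (nuD1 γ (q1 ^ 2) * nuD1 γ (q2 ^ 2) - nuD1 γ (q1 * q2 * r) ^ 2))
    - 1 / 2 * ((Sum.elim ![u1, u2] ![x1, x2]) ⬝ᵥ
        ((SigmaUX γ r q1 q2)⁻¹ *ᵥ (Sum.elim ![u1, u2] ![x1, x2])))
    + Omega (x1 / (q1 * Real.sqrt (nuD2 γ (q1 ^ 2))))
    + Omega (x2 / (q2 * Real.sqrt (nuD2 γ (q2 ^ 2))))

/-- Ψ⁰_ν(r). -/
def Psi0 (γ : ℕ → ℝ) (r : ℝ) : ℝ :=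
  Psi γ 1 1 r (-(E0 γ)) (-(E0 γ)) (-(x0 γ)) (-(x0 γ))

/-- G(ν). -/
def Gfun (γ : ℕ → ℝ) : ℝ :=
  Real.log (nuD2 γ 1 / nuD1 γ 1) -
    (nuD2 γ 1 + nuD1 γ 1) * (nuD2 γ 1 * nuF γ 1 + nuD1 γ 1 ^ 2 - nuD1 γ 1 * nuF γ 1) /
      (nuD2 γ 1 * nuD1 γ 1 ^ 2)

/-- ν is pure-like. -/
def PureLike (γ : ℕ → ℝ) : Prop := 0 < Gfun γ

/-- Condition M. -/
def ConditionM (γ : ℕ → ℝ) : Prop :=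
  Mixed γ ∧ PureLike γ ∧
    iteratedDeriv 2 (Psi0 γ) 0 < 0 ∧
    (∀ r ∈ Set.Ioo (-1 : ℝ) 1, r ≠ 0 → Psi0 γ r < Psi0 γ 0) ∧
    Filter.limsup (fun r : ℝ => (Psi0 γ r : EReal)) (nhdsWithin 1 (Set.Ioo (-1 : ℝ) 1))
      < ((Psi0 γ 0 : ℝ) : EReal) ∧
    Filter.limsup (fun r : ℝ => (Psi0 γ r : EReal)) (nhdsWithin (-1) (Set.Ioo (-1 : ℝ) 1))
      < ((Psi0 γ 0 : ℝ) : EReal)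

/-- Generic quadratic form of the six-dimensional Gaussian vector. -/
def QF (F D E : ℝ → ℝ) (q1 q2 r s u1 u2 x1 x2 g1 g2 : ℝ) : ℝ :=
  u1^2 * F (q1^2) + u2^2 * F (q2^2) + 2*u1*u2 * F (q1*q2*r)
  + x1^2 * (q1^2 * E (q1^2) + D (q1^2)) + x2^2 * (q2^2 * E (q2^2) + D (q2^2))
  + 2*x1*x2 * (q1*q2*r^2 * E (q1*q2*r) + r * D (q1*q2*r))
  + 2*u1*x1*q1 * D (q1^2) + 2*u2*x2*q2 * D (q2^2)
  + 2*u1*x2*q1*r * D (q1*q2*r) + 2*u2*x1*q2*r * D (q1*q2*r)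
  + g1^2 * D (q1^2) + g2^2 * D (q2^2)
  + 2*g1*g2 * (r * D (q1*q2*r) - q1*q2 * E (q1*q2*r) * s^2)
  - 2*u1*g2*q1*s * D (q1*q2*r) + 2*u2*g1*q2*s * D (q1*q2*r)
  - 2*x1*g2*s*(q1*q2*r * E (q1*q2*r) + D (q1*q2*r))
  + 2*x2*g1*s*(q1*q2*r * E (q1*q2*r) + D (q1*q2*r))

/-- The form of a monomial in reduced coordinates. -/
def QM (n : ℕ) (r s A B C D : ℝ) : ℝ :=
  A^2 + B^2 + 2*r^(n+2)*A*B + (n+2)*C^2 + (n+2)*D^2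
  + 2*C*D*((n+2)*r^(n+2) - (n+2)*(n+1)*r^n*s^2)
  - 2*A*D*(n+2)*s*r^(n+1) + 2*B*C*(n+2)*s*r^(n+1)

lemma QF_monomial (n : ℕ) (q1 q2 r s u1 u2 x1 x2 g1 g2 : ℝ) :
    QF (fun x => x^(n+2)) (fun x => (n+2)*x^(n+1)) (fun x => (n+2)*(n+1)*x^n)
      q1 q2 r s u1 u2 x1 x2 g1 g2 =
    QM n r s (q1^(n+1)*(u1*q1+(n+2)*x1)) (q2^(n+1)*(u2*q2+(n+2)*x2))
      (q1^(n+1)*g1) (q2^(n+1)*g2) := by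
  simp only [QF, QM, mul_pow, ← pow_mul]
  ring

lemma geom_amgm (r : ℝ) (n : ℕ) :
    (n+1) * |r|^n ≤ ∑ j ∈ Finset.range (n+1), r^(2*j) := by
  have h2 : ∑ j ∈ Finset.range (n+1), r^(2*j) = ∑ j ∈ Finset.range (n+1), r^(2*(n-j)) := by
    rw [← Finset.sum_range_reflect]
    apply Finset.sum_congr rfl
    intro j hj
    simp
  have h3 : ∑ j ∈ Finset.range (n+1), (2 * |r|^n) ≤
      ∑ j ∈ Finset.range (n+1), (r^(2*j) + r^(2*(n-j))) := by
    apply Finset.sum_le_sum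
    intro j hj
    have hj' : j ≤ n := by simp at hj; omega
    have e : |r|^n = |r|^j * |r|^(n-j) := by rw [← pow_add]; congr 1; omega
    have e1 : r^(2*j) = (|r|^j)^2 := by rw [pow_mul, ← sq_abs, ← pow_mul, ← pow_mul, mul_comm]
    have e2 : r^(2*(n-j)) = (|r|^(n-j))^2 := by
      rw [pow_mul, ← sq_abs, ← pow_mul, ← pow_mul, mul_comm]
    rw [e, e1, e2]
    nlinarith [sq_nonneg (|r|^j - |r|^(n-j))]
  rw [Finset.sum_add_distrib, ← h2, Finset.sum_const, Finset.card_range, nsmul_eq_mul] at h3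
  push_cast at h3
  linarith

lemma geom_amgm_strict (r : ℝ) (hr : |r| < 1) (n : ℕ) :
    (n+2) * |r|^(n+1) < ∑ j ∈ Finset.range (n+2), r^(2*j) := by
  have h2 : ∑ j ∈ Finset.range (n+2), r^(2*j) = ∑ j ∈ Finset.range (n+2), r^(2*(n+1-j)) := by
    rw [← Finset.sum_range_reflect]
    apply Finset.sum_congr rfl
    intro j hj
    simp
  have key : ∀ j ∈ Finset.range (n+2), |r|^(n+1) = |r|^j * |r|^(n+1-j) ∧
      r^(2*j) = (|r|^j)^2 ∧ r^(2*(n+1-j)) = (|r|^(n+1-j))^2 := by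
    intro j hj
    have hj' : j ≤ n+1 := by simp at hj; omega
    refine ⟨?_, ?_, ?_⟩
    · rw [← pow_add]; congr 1; omega
    · rw [pow_mul, ← sq_abs, ← pow_mul, ← pow_mul, mul_comm]
    · rw [pow_mul, ← sq_abs, ← pow_mul, ← pow_mul, mul_comm]
  have h3 : ∑ j ∈ Finset.range (n+2), (2 * |r|^(n+1)) <
      ∑ j ∈ Finset.range (n+2), (r^(2*j) + r^(2*(n+1-j))) := by
    apply Finset.sum_lt_sum
    · intro j hj
      obtain ⟨e, e1, e2⟩ := key j hj
      rw [e, e1, e2]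
      nlinarith [sq_nonneg (|r|^j - |r|^(n+1-j))]
    · refine ⟨0, by simp, ?_⟩
      obtain ⟨e, e1, e2⟩ := key 0 (by simp)
      rw [e, e1, e2]
      have : |r|^(n+1) < 1 := pow_lt_one₀ (abs_nonneg r) hr (by omega)
      simp only [pow_zero, Nat.sub_zero]
      have : 0 < 1 - |r|^(n+1) := by linarith
      nlinarith [mul_pos this this]
  rw [Finset.sum_add_distrib, ← h2, Finset.sum_const, Finset.card_range, nsmul_eq_mul] at h3
  push_cast at h3
  linarith

lemma quad_nonneg {a b c x y : ℝ} (ha : 0 < a) (h : b^2 ≤ a*c) :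
    0 ≤ a*x^2 + 2*b*x*y + c*y^2 := by
  have : 0 ≤ a * (a*x^2 + 2*b*x*y + c*y^2) := by
    nlinarith [sq_nonneg (a*x+b*y), mul_nonneg (sub_nonneg.2 h) (sq_nonneg y)]
  exact nonneg_of_mul_nonneg_right this ha

lemma quad_zero {a b c x y : ℝ} (ha : 0 < a) (h : b^2 < a*c)
    (h0 : a*x^2 + 2*b*x*y + c*y^2 = 0) : x = 0 ∧ y = 0 := by
  have e : (a*x+b*y)^2 + (a*c-b^2)*y^2 = 0 := by linear_combination a * h0
  have hy : y = 0 := by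
    have : (a*c-b^2)*y^2 = 0 := le_antisymm (by nlinarith [sq_nonneg (a*x+b*y)])
      (mul_nonneg (by linarith) (sq_nonneg _))
    rcases mul_eq_zero.1 this with h1 | h1
    · linarith
    · exact pow_eq_zero_iff (two_ne_zero) |>.1 h1
  subst hy
  refine ⟨?_, rfl⟩
  have : a * x^2 = 0 := by simpa using h0
  simpa [ha.ne'] using this

lemma QM_split (n : ℕ) (r s A B C D : ℝ) :
    2 * QM n r s A B C D =
    ((1+r^(n+2))*(A+B)^2 + 2*((n+2)*s*r^(n+1))*(A+B)*(C-D)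
      + ((n+2) - ((n+2)*r^(n+2) - (n+2)*(n+1)*r^n*s^2))*(C-D)^2) +
    ((1-r^(n+2))*(A-B)^2 + 2*(-((n+2)*s*r^(n+1)))*(A-B)*(C+D)
      + ((n+2) + ((n+2)*r^(n+2) - (n+2)*(n+1)*r^n*s^2))*(C+D)^2) := by
  simp only [QM]; ring

lemma det_id1 (n : ℕ) (r s : ℝ) (hs : s^2 = 1 - r^2) :
    (1+r^(n+2))*((n+2) - ((n+2)*r^(n+2) - (n+2)*(n+1)*r^n*s^2)) - ((n+2)*s*r^(n+1))^2
    = (n+2)*s^2*(∑ j ∈ Finset.range (n+1), r^(2*j) + (n+1)*r^n) := by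
  have g : (∑ j ∈ Finset.range (n+1), r^(2*j)) * s^2 = 1 - r^(2*(n+1)) := by
    have := geom_sum_mul_neg (r^2) (n+1)
    simp only [← pow_mul] at this
    rw [hs]; exact this
  have : ((n:ℝ)+2)*s^2*(∑ j ∈ Finset.range (n+1), r^(2*j) + (n+1)*r^n) =
    (n+2)*(1 - r^(2*(n+1))) + (n+2)*s^2*(n+1)*r^n := by rw [← g]; ring
  rw [this, mul_pow, mul_pow, hs]; ring

lemma det_id2 (n : ℕ) (r s : ℝ) (hs : s^2 = 1 - r^2) :
    (1-r^(n+2))*((n+2) + ((n+2)*r^(n+2) - (n+2)*(n+1)*r^n*s^2)) - (-((n+2)*s*r^(n+1)))^2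
    = (n+2)*s^2*(∑ j ∈ Finset.range (n+1), r^(2*j) - (n+1)*r^n) := by
  have g : (∑ j ∈ Finset.range (n+1), r^(2*j)) * s^2 = 1 - r^(2*(n+1)) := by
    have := geom_sum_mul_neg (r^2) (n+1)
    simp only [← pow_mul] at this
    rw [hs]; exact this
  have : ((n:ℝ)+2)*s^2*(∑ j ∈ Finset.range (n+1), r^(2*j) - (n+1)*r^n) =
    (n+2)*(1 - r^(2*(n+1))) - (n+2)*s^2*(n+1)*r^n := by rw [← g]; ring
  rw [this, neg_sq, mul_pow, mul_pow, hs]; ring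

lemma pow_bds (r : ℝ) (hr : |r| < 1) (n : ℕ) : 0 < 1 + r^(n+2) ∧ 0 < 1 - r^(n+2) := by
  have h : |r^(n+2)| < 1 := by rw [abs_pow]; exact pow_lt_one₀ (abs_nonneg r) hr (by omega)
  rw [abs_lt] at h
  constructor <;> linarith [h.1, h.2]

lemma QM_nonneg (n : ℕ) (r s A B C D : ℝ) (hr : |r| < 1) (hs : s^2 = 1 - r^2) :
    0 ≤ QM n r s A B C D := by
  have h := QM_split n r s A B C D
  obtain ⟨b1, b2⟩ := pow_bds r hr n
  have am := geom_amgm r n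
  rw [← abs_pow] at am
  have n1 : (0:ℝ) ≤ n + 1 := by positivity
  have l1 := mul_le_mul_of_nonneg_left (le_abs_self (r^n)) n1
  have l2 := mul_le_mul_of_nonneg_left (neg_abs_le (r^n)) n1
  have c : (0:ℝ) ≤ (n+2)*s^2 := by positivity
  have d1 := det_id1 n r s hs
  have d2 := det_id2 n r s hs
  have e1 := mul_nonneg c (show 0 ≤ ∑ j ∈ Finset.range (n+1), r^(2*j) + (n+1)*r^n by linarith)
  have e2 := mul_nonneg c (show 0 ≤ ∑ j ∈ Finset.range (n+1), r^(2*j) - (n+1)*r^n by linarith)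
  rw [← d1] at e1
  rw [← d2] at e2
  have p1 := quad_nonneg (x := A+B) (y := C-D) b1 (sub_nonneg.1 e1)
  have p2 := quad_nonneg (x := A-B) (y := C+D) b2 (sub_nonneg.1 e2)
  linarith

lemma QM_zero (n : ℕ) (r s A B C D : ℝ) (hr : |r| < 1) (hs : s^2 = 1 - r^2)
    (h0 : QM (n+1) r s A B C D = 0) : A = 0 ∧ B = 0 ∧ C = 0 ∧ D = 0 := by
  have h := QM_split (n+1) r s A B C D
  obtain ⟨b1, b2⟩ := pow_bds r hr (n+1)
  have am := geom_amgm_strict r hr n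
  rw [← abs_pow] at am
  have n1 : (0:ℝ) ≤ n + 2 := by positivity
  have l1 := mul_le_mul_of_nonneg_left (le_abs_self (r^(n+1))) n1
  have l2 := mul_le_mul_of_nonneg_left (neg_abs_le (r^(n+1))) n1
  have s2 : 0 < s^2 := by
    rw [hs, ← sq_abs]
    nlinarith [abs_nonneg r]
  have c : (0:ℝ) < (((n+1:ℕ):ℝ)+2)*s^2 := by positivity
  have d1 := det_id1 (n+1) r s hs
  have d2 := det_id2 (n+1) r s hs
  have e1 := mul_pos c (show 0 < ∑ j ∈ Finset.range (n+1+1), r^(2*j) + (((n+1:ℕ):ℝ)+1)*r^(n+1) by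
    push_cast; linarith)
  have e2 := mul_pos c (show 0 < ∑ j ∈ Finset.range (n+1+1), r^(2*j) - (((n+1:ℕ):ℝ)+1)*r^(n+1) by
    push_cast; linarith)
  rw [← d1] at e1
  rw [← d2] at e2
  have p1 := quad_nonneg (x := A+B) (y := C-D) b1 (sub_pos.1 e1).le
  have p2 := quad_nonneg (x := A-B) (y := C+D) b2 (sub_pos.1 e2).le
  have z1 := quad_zero (x := A+B) (y := C-D) b1 (sub_pos.1 e1) (by linarith)
  have z2 := quad_zero (x := A-B) (y := C+D) b2 (sub_pos.1 e2) (by linarith)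
  refine ⟨?_, ?_, ?_, ?_⟩ <;> linarith [z1.1, z1.2, z2.1, z2.2]

lemma QM_zero' (n : ℕ) (r s A B : ℝ) (hr : |r| < 1)
    (h0 : QM n r s A B 0 0 = 0) : A = 0 ∧ B = 0 := by
  obtain ⟨b1, b2⟩ := pow_bds r hr n
  apply quad_zero (a := 1) (b := r^(n+2)) (c := 1) one_pos
  · nlinarith
  · simp only [QM] at h0; linarith

lemma summ_main (γ : ℕ → ℝ) (hγ : GammaDecay γ) :
    Summable (fun p : ℕ => γ p ^ 2 * (p:ℝ)^2) := by
  obtain ⟨h0, ρ, hρ, hρ1, hev⟩ := hγ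
  have hs := summable_pow_mul_geometric_of_norm_lt_one (R := ℝ) 2 (r := ρ^2)
    (by rw [Real.norm_eq_abs, abs_of_nonneg (by positivity)]; nlinarith)
  refine Summable.of_norm_bounded_eventually_nat hs ?_
  filter_upwards [hev] with p hp
  rw [Real.norm_eq_abs, abs_of_nonneg (by positivity), mul_comm, ← pow_mul, mul_comm 2 p, pow_mul]
  have := h0 p
  gcongr

lemma hasSum_shift (f : ℕ → ℝ) (hf : Summable (fun p => if 2 ≤ p then f p else 0)) :
    HasSum (fun n => f (n+2)) (∑' p, if 2 ≤ p then f p else 0) := by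
  have := (hasSum_nat_add_iff' 2).mpr hf.hasSum
  simpa [Finset.sum_range_succ] using this

lemma hasSum_gen (γ : ℕ → ℝ) (hγ : GammaDecay γ) (f : ℕ → ℝ)
    (hf : ∀ p, 2 ≤ p → |f p| ≤ γ p ^ 2 * (p:ℝ)^2) :
    HasSum (fun n => f (n+2)) (∑' p, if 2 ≤ p then f p else 0) := by
  apply hasSum_shift
  refine Summable.of_norm_bounded (summ_main γ hγ) ?_
  intro p
  split_ifs with h
  · exact hf p h
  · simp; positivity

lemma hasSum_nuF (γ : ℕ → ℝ) (hγ : GammaDecay γ) (x : ℝ) (hx : |x| ≤ 1) :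
    HasSum (fun n : ℕ => γ (n+2) ^ 2 * x^(n+2)) (nuF γ x) := by
  apply hasSum_gen γ hγ (fun p => γ p ^ 2 * x^p)
  intro p hp
  have hp' : (2:ℝ) ≤ p := by exact_mod_cast hp
  rw [abs_mul, abs_pow, abs_pow, sq_abs]
  have := pow_le_one₀ (n := p) (abs_nonneg x) hx
  gcongr
  nlinarith

lemma hasSum_nuD1 (γ : ℕ → ℝ) (hγ : GammaDecay γ) (x : ℝ) (hx : |x| ≤ 1) :
    HasSum (fun n : ℕ => γ (n+2) ^ 2 * ((n+2) * x^(n+1))) (nuD1 γ x) := by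
  have := hasSum_gen γ hγ (fun p => γ p ^ 2 * p * x^(p-1)) ?_
  · refine (congrArg (fun f => HasSum f (nuD1 γ x)) ?_).mpr this
    funext n
    push_cast
    ring
  intro p hp
  have hp' : (2:ℝ) ≤ p := by exact_mod_cast hp
  rw [abs_mul, abs_mul, abs_pow, abs_pow, sq_abs, mul_assoc, Nat.abs_cast]
  have := pow_le_one₀ (n := p-1) (abs_nonneg x) hx
  gcongr
  nlinarith

lemma hasSum_nuD2 (γ : ℕ → ℝ) (hγ : GammaDecay γ) (x : ℝ) (hx : |x| ≤ 1) :
    HasSum (fun n : ℕ => γ (n+2) ^ 2 * ((n+2) * (n+1) * x^n)) (nuD2 γ x) := by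
  have := hasSum_gen γ hγ (fun p => γ p ^ 2 * p * ((p:ℝ)-1) * x^(p-2)) ?_
  · refine (congrArg (fun f => HasSum f (nuD2 γ x)) ?_).mpr this
    funext n
    push_cast
    ring
  intro p hp
  have hp' : (2:ℝ) ≤ p := by exact_mod_cast hp
  rw [abs_mul, abs_mul, abs_mul, abs_pow, abs_pow, sq_abs, mul_assoc, mul_assoc, Nat.abs_cast,
    abs_of_nonneg (show (0:ℝ) ≤ p - 1 by linarith)]
  have := pow_le_one₀ (n := p-2) (abs_nonneg x) hx
  gcongr
  have : ((p:ℝ)-1) * |x|^(p-2) ≤ (p-1)*1 := by gcongr; linarith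
  nlinarith

lemma hasSum_QF (γ : ℕ → ℝ) (hγ : GammaDecay γ) (q1 q2 r s u1 u2 x1 x2 g1 g2 : ℝ)
    (h1 : |q1^2| ≤ 1) (h2 : |q2^2| ≤ 1) (h3 : |q1*q2*r| ≤ 1) :
    HasSum (fun n : ℕ => γ (n+2)^2 * QM n r s (q1^(n+1)*(u1*q1+(n+2)*x1))
      (q2^(n+1)*(u2*q2+(n+2)*x2)) (q1^(n+1)*g1) (q2^(n+1)*g2))
      (QF (nuF γ) (nuD1 γ) (nuD2 γ) q1 q2 r s u1 u2 x1 x2 g1 g2) := by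
  have F1 := hasSum_nuF γ hγ _ h1
  have F2 := hasSum_nuF γ hγ _ h2
  have F3 := hasSum_nuF γ hγ _ h3
  have D1 := hasSum_nuD1 γ hγ _ h1
  have D2 := hasSum_nuD1 γ hγ _ h2
  have D3 := hasSum_nuD1 γ hγ _ h3
  have E1 := hasSum_nuD2 γ hγ _ h1
  have E2 := hasSum_nuD2 γ hγ _ h2
  have E3 := hasSum_nuD2 γ hγ _ h3
  have T := ((((((((((((((((F1.mul_left (u1^2)).add (F2.mul_left (u2^2))).add
    (F3.mul_left (2*u1*u2))).add
    (((E1.mul_left (q1^2)).add D1).mul_left (x1^2))).add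
    (((E2.mul_left (q2^2)).add D2).mul_left (x2^2))).add
    (((E3.mul_left (q1*q2*r^2)).add (D3.mul_left r)).mul_left (2*x1*x2))).add
    (D1.mul_left (2*u1*x1*q1))).add (D2.mul_left (2*u2*x2*q2))).add
    (D3.mul_left (2*u1*x2*q1*r))).add (D3.mul_left (2*u2*x1*q2*r))).add
    (D1.mul_left (g1^2))).add (D2.mul_left (g2^2))).add
    (((D3.mul_left r).sub ((E3.mul_left (q1*q2)).mul_right (s^2))).mul_left (2*g1*g2))).sub
    (D3.mul_left (2*u1*g2*q1*s))).add (D3.mul_left (2*u2*g1*q2*s))).sub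
    (((E3.mul_left (q1*q2*r)).add D3).mul_left (2*x1*g2*s))).add
    (((E3.mul_left (q1*q2*r)).add D3).mul_left (2*x2*g1*s))
  refine (congrArg (fun f => HasSum f
    (QF (nuF γ) (nuD1 γ) (nuD2 γ) q1 q2 r s u1 u2 x1 x2 g1 g2)) ?_).mpr T
  funext n
  rw [← QF_monomial]
  simp only [QF]
  ring

lemma mixed_ge (γ : ℕ → ℝ) (hmix : Mixed γ) :
    ∃ n m : ℕ, n + 1 ≠ m ∧ γ (n+1+2) ≠ 0 ∧ γ (m+2) ≠ 0 := by
  obtain ⟨p, q, hp, hq, hne, h1, h2⟩ := hmix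
  by_cases h : 3 ≤ p
  · refine ⟨p-3, q-2, by omega, ?_, ?_⟩
    · rwa [show p - 3 + 1 + 2 = p by omega]
    · rwa [show q - 2 + 2 = q by omega]
  · refine ⟨q-3, p-2, by omega, ?_, ?_⟩
    · rwa [show q - 3 + 1 + 2 = q by omega]
    · rwa [show p - 2 + 2 = p by omega]

lemma lin_zero {n m : ℕ} (hnm : n ≠ m) {a b : ℝ} (h1 : a + (n+2)*b = 0) (h2 : a + (m+2)*b = 0) :
    a = 0 ∧ b = 0 := by
  have hb : ((n:ℝ) - m) * b = 0 := by linarith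
  have : (n:ℝ) - m ≠ 0 := sub_ne_zero.2 (by exact_mod_cast hnm)
  have hb : b = 0 := by simpa [this] using hb
  subst hb
  exact ⟨by linarith, rfl⟩

lemma QF_pos (γ : ℕ → ℝ) (hγ : GammaDecay γ) (hmix : Mixed γ) (q1 q2 r s u1 u2 x1 x2 g1 g2 : ℝ)
    (hr : |r| < 1) (hs : s^2 = 1 - r^2) (hq1 : q1 ∈ Set.Ioc (0 : ℝ) 1)
    (hq2 : q2 ∈ Set.Ioc (0 : ℝ) 1)
    (hne : ¬ (u1 = 0 ∧ u2 = 0 ∧ x1 = 0 ∧ x2 = 0 ∧ g1 = 0 ∧ g2 = 0)) :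
    0 < QF (nuF γ) (nuD1 γ) (nuD2 γ) q1 q2 r s u1 u2 x1 x2 g1 g2 := by
  obtain ⟨a1, b1⟩ := hq1
  obtain ⟨a2, b2⟩ := hq2
  have H := hasSum_QF γ hγ q1 q2 r s u1 u2 x1 x2 g1 g2
    (by rw [abs_pow, abs_of_pos a1]; exact pow_le_one₀ a1.le b1)
    (by rw [abs_pow, abs_of_pos a2]; exact pow_le_one₀ a2.le b2)
    (by rw [abs_mul, abs_mul, abs_of_pos a1, abs_of_pos a2]
        exact mul_le_one₀ (mul_le_one₀ b1 a2.le b2) (abs_nonneg r) hr.le)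
  have hnn := fun n : ℕ => mul_nonneg (sq_nonneg (γ (n+2)))
    (QM_nonneg n r s (q1^(n+1)*(u1*q1+(n+2)*x1))
      (q2^(n+1)*(u2*q2+(n+2)*x2)) (q1^(n+1)*g1) (q2^(n+1)*g2) hr hs)
  by_contra hcon
  have hz : QF (nuF γ) (nuD1 γ) (nuD2 γ) q1 q2 r s u1 u2 x1 x2 g1 g2 = 0 :=
    le_antisymm (not_lt.1 hcon) (H.nonneg hnn)
  rw [hz, hasSum_zero_iff_of_nonneg hnn] at H
  obtain ⟨n, m, hnm, hn, hm⟩ := mixed_ge γ hmix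
  have H1 := congrFun H (n+1)
  have H2 := congrFun H m
  simp only [Pi.zero_apply, mul_eq_zero, pow_eq_zero_iff (two_ne_zero (α := ℕ)), hn, hm, false_or] at H1 H2
  obtain ⟨z1, z2, z3, z4⟩ := QM_zero n r s _ _ _ _ hr hs H1
  have ne1 : ∀ k, q1^k ≠ 0 := fun k => (pow_pos a1 k).ne'
  have ne2 : ∀ k, q2^k ≠ 0 := fun k => (pow_pos a2 k).ne'
  simp only [mul_eq_zero, ne1, ne2, false_or] at z1 z2 z3 z4
  subst z3 z4
  rw [mul_zero, mul_zero] at H2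
  obtain ⟨y1, y2⟩ := QM_zero' m r s _ _ hr H2
  simp only [mul_eq_zero, ne1, ne2, false_or] at y1 y2
  obtain ⟨w1, w2⟩ := lin_zero hnm z1 y1
  obtain ⟨w3, w4⟩ := lin_zero hnm z2 y2
  simp only [mul_eq_zero, a1.ne', a2.ne', or_false] at w1 w3
  exact hne ⟨w1, w3, w2, w4, rfl, rfl⟩

lemma dA_symm (γ : ℕ → ℝ) (r q1 q2 : ℝ) : dA γ r q2 q1 = dA γ r q1 q2 := by
  simp only [dA, mul_comm q2 q1]

lemma sigmaUX_posDef (γ : ℕ → ℝ) (hγ : GammaDecay γ) (hmix : Mixed γ)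
    (r : ℝ) (hr : r ∈ Set.Ioo (-1 : ℝ) 1) (q1 q2 : ℝ)
    (hq1 : q1 ∈ Set.Ioc (0 : ℝ) 1) (hq2 : q2 ∈ Set.Ioc (0 : ℝ) 1) :
    (SigmaUX γ r q1 q2).PosDef := by
  have hr' : |r| < 1 := abs_lt.2 hr
  obtain ⟨s, hs⟩ : ∃ s : ℝ, s^2 = 1 - r^2 :=
    ⟨Real.sqrt (1-r^2), Real.sq_sqrt (by nlinarith [hr.1, hr.2])⟩
  have P := fun u1 u2 x1 x2 g1 g2 => QF_pos γ hγ hmix q1 q2 r s u1 u2 x1 x2 g1 g2 hr' hs hq1 hq2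
  have hN1 : 0 < nuD1 γ (q1^2) := by
    have := P 0 0 0 0 1 0 (by simp)
    simpa [QF] using this
  have hDet : 0 < nuD1 γ (q1^2) * nuD1 γ (q2^2) - dA γ r q1 q2 ^ 2 := by
    have := P 0 0 0 0 (-dA γ r q1 q2) (nuD1 γ (q1^2)) (by simp [hN1.ne'])
    have e : QF (nuF γ) (nuD1 γ) (nuD2 γ) q1 q2 r s 0 0 0 0 (-dA γ r q1 q2) (nuD1 γ (q1^2))
       = nuD1 γ (q1^2) * (nuD1 γ (q1^2) * nuD1 γ (q2^2) - dA γ r q1 q2 ^ 2) := by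
      simp only [QF, dA, hs]; ring
    rw [e] at this
    exact pos_of_mul_pos_right this hN1.le
  refine Matrix.PosDef.of_dotProduct_mulVec_pos ?_ ?_
  · refine Matrix.IsHermitian.fromBlocks ?_ ?_ ?_
    · ext i j; fin_cases i <;> fin_cases j <;> simp [SigmaU]
    · simp
    · ext i j; fin_cases i <;> fin_cases j <;> simp [SigmaX]
  · intro v hv
    set u1 := v (Sum.inl 0) with hu1
    set u2 := v (Sum.inl 1) with hu2
    set x1 := v (Sum.inr 0) with hx1
    set x2 := v (Sum.inr 1) with hx2
    set Dt := nuD1 γ (q1^2) * nuD1 γ (q2^2) - dA γ r q1 q2 ^ 2 with hDt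
    set m1 := nuD1 γ (q1*q2*r) with hm1
    set c1 := s * (u2*q2*m1 + x2 * ups γ r q1 q2) with hc1
    set c2 := -s * (u1*q1*m1 + x1 * ups γ r q1 q2) with hc2
    have hP := P u1 u2 x1 x2 (-(nuD1 γ (q2^2) * c1 - dA γ r q1 q2 * c2)/Dt)
      (-(nuD1 γ (q1^2) * c2 - dA γ r q1 q2 * c1)/Dt) (by
        rintro ⟨h1, h2, h3, h4, -⟩
        apply hv
        ext i
        rcases i with i | i <;> fin_cases i <;> assumption)
    refine lt_of_lt_of_eq hP ?_
    have hD : Dt ≠ 0 := hDet.ne'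
    have hup : ups γ r q2 q1 = ups γ r q1 q2 := by simp only [ups, mul_comm q2 q1]
    have ha2 : a2 γ r q1 q2 = nuD1 γ (q2^2) / Dt := rfl
    have ha2' : a2 γ r q2 q1 = nuD1 γ (q1^2) / Dt := by
      simp only [a2, dA_symm γ r q1 q2, hDt, mul_comm (nuD1 γ (q2^2))]
    have ha4 : a4 γ r q1 q2 = -dA γ r q1 q2 / Dt := rfl
    have ha4' : a4 γ r q2 q1 = -dA γ r q1 q2 / Dt := by
      simp only [a4, dA_symm γ r q1 q2, hDt, mul_comm (nuD1 γ (q2^2))]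
    simp only [SigmaUX, dotProduct, Matrix.mulVec, Fintype.sum_sum_type, Fin.sum_univ_two,
      Matrix.fromBlocks_apply₁₁, Matrix.fromBlocks_apply₁₂, Matrix.fromBlocks_apply₂₁,
      Matrix.fromBlocks_apply₂₂, Matrix.transpose_apply, SigmaU, SigmaX, SigmaB,
      Matrix.of_apply, Matrix.cons_val', Matrix.cons_val_zero, Matrix.cons_val_one,
      Matrix.cons_val_fin_one, Pi.star_apply, star_trivial, ← hu1, ← hu2, ← hx1, ← hx2, hup,
      ha2, ha2', ha4, ha4', ← hm1]
    have key : ∀ g1 g2, QF (nuF γ) (nuD1 γ) (nuD2 γ) q1 q2 r s u1 u2 x1 x2 g1 g2 =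
      QF (nuF γ) (nuD1 γ) (nuD2 γ) q1 q2 r s u1 u2 x1 x2 0 0 + (g1^2*nuD1 γ (q1^2)
        + g2^2*nuD1 γ (q2^2) + 2*g1*g2*dA γ r q1 q2 + 2*g1*c1 + 2*g2*c2) := by
      intro g1 g2
      simp only [QF, dA, hc1, hc2, ups, hs, hm1]; ring
    rw [key]
    have key2 : (-(nuD1 γ (q2^2) * c1 - dA γ r q1 q2 * c2)/Dt)^2*nuD1 γ (q1^2)
        + (-(nuD1 γ (q1^2) * c2 - dA γ r q1 q2 * c1)/Dt)^2*nuD1 γ (q2^2)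
        + 2*(-(nuD1 γ (q2^2) * c1 - dA γ r q1 q2 * c2)/Dt)
           *(-(nuD1 γ (q1^2) * c2 - dA γ r q1 q2 * c1)/Dt)*dA γ r q1 q2
        + 2*(-(nuD1 γ (q2^2) * c1 - dA γ r q1 q2 * c2)/Dt)*c1
        + 2*(-(nuD1 γ (q1^2) * c2 - dA γ r q1 q2 * c1)/Dt)*c2
        = -(nuD1 γ (q2^2) * c1^2 - 2*dA γ r q1 q2*c1*c2 + nuD1 γ (q1^2)*c2^2)/Dt := by
      field_simp
      rw [hDt]; ring
    rw [key2]
    have hc11 : c1^2 = (1-r^2) * (u2*q2*m1 + x2 * ups γ r q1 q2)^2 := by rw [hc1, ← hs]; ring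
    have hc22 : c2^2 = (1-r^2) * (u1*q1*m1 + x1 * ups γ r q1 q2)^2 := by rw [hc2, ← hs]; ring
    have hc12 : 2*dA γ r q1 q2*c1*c2 = -2*dA γ r q1 q2*(1-r^2) * (u2*q2*m1 + x2 * ups γ r q1 q2)
        * (u1*q1*m1 + x1 * ups γ r q1 q2) := by rw [hc1, hc2, ← hs]; ring
    rw [hc11, hc22, hc12]
    simp only [QF, ← hm1]
    ring

lemma sigmaQ_posDef (γ : ℕ → ℝ) (hγ : GammaDecay γ) (hmix : Mixed γ)
    (q : ℝ) (hq : q ∈ Set.Ioc (0 : ℝ) 1) : (SigmaQ γ q).PosDef := by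
  refine Matrix.PosDef.of_dotProduct_mulVec_pos ?_ ?_
  · ext i j; fin_cases i <;> fin_cases j <;> simp [SigmaQ]
  · intro v hv
    have hP := QF_pos γ hγ hmix q q 0 1 (v 0) 0 (q * v 1) 0 0 0 (by simp) (by simp) hq hq (by
      rintro ⟨h1, -, h2, -⟩
      apply hv
      have h2 : v 1 = 0 := by simpa [hq.1.ne'] using h2
      ext i; fin_cases i <;> assumption)
    refine lt_of_lt_of_eq hP ?_
    simp [SigmaQ, dotProduct, Matrix.mulVec, Fin.sum_univ_two, QF]
    ring

/-- If ν is not a monomial, then for any r ∈ (−1,1) and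
q, q₁, q₂ ∈ (0,1], the matrices Σ_{U,X}(r,q₁,q₂) and Σ_q are invertible, and hence
strictly positive definite. -/
theorem sigmaUX_sigmaQ_invertible_posDef
    (γ : ℕ → ℝ) (hγ : GammaDecay γ) (hnorm : nuF γ 1 = 1) (hmix : Mixed γ)
    (r : ℝ) (hr : r ∈ Set.Ioo (-1 : ℝ) 1)
    (q q1 q2 : ℝ) (hq : q ∈ Set.Ioc (0 : ℝ) 1)
    (hq1 : q1 ∈ Set.Ioc (0 : ℝ) 1) (hq2 : q2 ∈ Set.Ioc (0 : ℝ) 1) :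
    IsUnit (SigmaUX γ r q1 q2) ∧ (SigmaUX γ r q1 q2).PosDef ∧
      IsUnit (SigmaQ γ q) ∧ (SigmaQ γ q).PosDef := by
  have h1 := sigmaUX_posDef γ hγ hmix r hr q1 q2 hq1 hq2
  have h2 := sigmaQ_posDef γ hγ hmix q hq
  exact ⟨h1.isUnit, h1, h2.isUnit, h2⟩

end SpinGlass
end
end

section
/- Assume ν satisfies Condition M. Then there exists δ > 0 such that for every q ∈ (1−δ, 1], the function q ↦ E_0(q) is differentiable at q with (d/dq)E_0(q) = x_0(q). -/
open MeasureTheory ProbabilityTheory Real Filter Set Matrix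
open scoped ENNReal

noncomputable section

namespace SpinGlass


def KK (t : ℝ) : ℝ := t / 4 * Real.sqrt (t ^ 2 - 4) - Real.log (Real.sqrt (t ^ 2 / 4 - 1) + t / 2)

lemma KK_two : KK 2 = 0 := by
  unfold KK; norm_num

lemma Omega_ge {y : ℝ} (h : 2 ≤ |y|) : Omega y = y ^ 2 / 4 - 1 / 2 - KK |y| := by
  unfold Omega
  split_ifs with h1
  · have : |y| = 2 := le_antisymm h1 h
    rw [this, KK_two]; ring
  · unfold KK; rw [sq_abs]

lemma KK_val {n : ℝ} (h0 : 0 < n) (h1 : n < 1) :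
    KK (n + n⁻¹) = (n⁻¹ ^ 2 - n ^ 2) / 4 + Real.log n := by
  have hi : 1 < n⁻¹ := (one_lt_inv₀ h0).2 h1
  have hm : n * n⁻¹ = 1 := mul_inv_cancel₀ h0.ne'
  have e1 : Real.sqrt ((n + n⁻¹) ^ 2 - 4) = n⁻¹ - n := by
    rw [Real.sqrt_eq_iff_mul_self_eq_of_pos (by linarith)]
    nlinarith
  have e2 : Real.sqrt ((n + n⁻¹) ^ 2 / 4 - 1) = (n⁻¹ - n) / 2 := by
    rw [Real.sqrt_eq_iff_mul_self_eq_of_pos (by linarith)]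
    nlinarith
  unfold KK
  rw [e1, e2, show (n⁻¹ - n) / 2 + (n + n⁻¹) / 2 = n⁻¹ by ring, Real.log_inv]
  ring

lemma KK_deriv {t : ℝ} (ht : 2 < t) : HasDerivAt KK (Real.sqrt (t ^ 2 - 4) / 2) t := by
  have hp : 0 < t ^ 2 - 4 := by nlinarith
  have hs : 0 < Real.sqrt (t ^ 2 - 4) := Real.sqrt_pos.2 hp
  have hsq : Real.sqrt (t ^ 2 - 4) ^ 2 = t ^ 2 - 4 := Real.sq_sqrt hp.le
  have e2 : Real.sqrt (t ^ 2 / 4 - 1) = Real.sqrt (t ^ 2 - 4) / 2 := by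
    rw [Real.sqrt_eq_iff_mul_self_eq_of_pos (by linarith)]
    nlinarith
  have hp2 : 0 < t ^ 2 / 4 - 1 := by linarith
  have d1 : HasDerivAt (fun t : ℝ => t ^ 2 - 4) (2 * t) t := by
    simpa using (hasDerivAt_pow 2 t).sub_const 4
  have d2 : HasDerivAt (fun t : ℝ => t ^ 2 / 4 - 1) (2 * t / 4) t := by
    simpa using ((hasDerivAt_pow 2 t).div_const 4).sub_const 1
  have d3 := ((hasDerivAt_id t).div_const 4).mul (d1.sqrt hp.ne')
  have d4 := ((d2.sqrt hp2.ne').add ((hasDerivAt_id t).div_const 2)).log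
    (by simp only [Pi.add_apply, id]; rw [e2]; positivity)
  have d5 := d3.sub d4
  refine d5.congr_deriv ?_
  simp only [Pi.add_apply, id]
  rw [e2]
  set s := Real.sqrt (t ^ 2 - 4)
  have : s + t ≠ 0 := by positivity
  field_simp
  nlinarith

lemma KK_convex : ConvexOn ℝ (Ici 2) KK := by
  apply MonotoneOn.convexOn_of_deriv (convex_Ici 2)
  · have hc : ContinuousOn (fun t : ℝ => Real.sqrt (t ^ 2 / 4 - 1) + t / 2) (Ici 2) := by fun_prop
    have h2 := hc.log (by
      intro t ht
      have : (2:ℝ) ≤ t := ht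
      positivity)
    have h1 : ContinuousOn (fun t : ℝ => t / 4 * Real.sqrt (t ^ 2 - 4)) (Ici 2) := by fun_prop
    exact h1.sub h2
  · rw [interior_Ici]
    intro t ht
    exact (KK_deriv ht).differentiableAt.differentiableWithinAt
  · rw [interior_Ici]
    intro t ht s hs hts
    rw [(KK_deriv ht).deriv, (KK_deriv hs).deriv]
    have : (2:ℝ) < t := ht
    gcongr

lemma KK_tangent {n t : ℝ} (h0 : 0 < n) (h1 : n < 1) (ht : 2 ≤ t) :
    KK (n + n⁻¹) + (n⁻¹ - n) / 2 * (t - (n + n⁻¹)) ≤ KK t := by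
  have hi : 1 < n⁻¹ := (one_lt_inv₀ h0).2 h1
  have hm : n * n⁻¹ = 1 := mul_inv_cancel₀ h0.ne'
  have e1 : Real.sqrt ((n + n⁻¹) ^ 2 - 4) = n⁻¹ - n := by
    rw [Real.sqrt_eq_iff_mul_self_eq_of_pos (by linarith)]
    nlinarith
  have hT : 2 < n + n⁻¹ := by nlinarith
  have hd := KK_deriv hT
  rw [e1] at hd
  rcases lt_trichotomy t (n + n⁻¹) with h | h | h
  · have := KK_convex.slope_le_of_hasDerivAt ht hT.le h hd
    rw [slope_def_field, div_le_iff₀ (by linarith)] at this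
    linarith
  · rw [h]; simp
  · have := KK_convex.le_slope_of_hasDerivAt hT.le ht h hd
    rw [slope_def_field, le_div_iff₀ (by linarith)] at this
    linarith

lemma Omega_val {n : ℝ} (h0 : 0 < n) (h1 : n < 1) :
    Omega (-(n + n⁻¹)) = n ^ 2 / 2 - Real.log n := by
  have hi : 1 < n⁻¹ := (one_lt_inv₀ h0).2 h1
  have hm : n * n⁻¹ = 1 := mul_inv_cancel₀ h0.ne'
  have ha : |-(n + n⁻¹)| = n + n⁻¹ := by rw [abs_neg, abs_of_pos (by linarith)]
  rw [Omega_ge (by rw [ha]; nlinarith), ha, KK_val h0 h1]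
  nlinarith

lemma Omega_bound {n : ℝ} (h0 : 0 < n) (h1 : n < 1) (y : ℝ) :
    Omega y ≤ n ^ 2 / 2 - Real.log n - n * (y + (n + n⁻¹)) + (y + (n + n⁻¹)) ^ 2 / 4 := by
  have hi : 1 < n⁻¹ := (one_lt_inv₀ h0).2 h1
  have hm : n * n⁻¹ = 1 := mul_inv_cancel₀ h0.ne'
  have key : ∀ t : ℝ, 2 ≤ t → -y ≤ t → Omega y = y ^ 2 / 4 - 1 / 2 - KK t → 
      Omega y ≤ n ^ 2 / 2 - Real.log n - n * (y + (n + n⁻¹)) + (y + (n + n⁻¹)) ^ 2 / 4 := by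
    intro t ht hy he
    rw [he]
    have := KK_tangent h0 h1 ht
    rw [KK_val h0 h1] at this
    have h3 : 0 ≤ (n⁻¹ - n) / 2 * (t - (-y)) := mul_nonneg (by linarith) (by linarith)
    nlinarith
  rcases le_total 2 |y| with h | h
  · exact key |y| h (neg_le_abs y) (Omega_ge h)
  · refine key 2 le_rfl ((neg_le_abs y).trans h) ?_
    unfold Omega
    rw [if_pos h, KK_two]; ring

lemma Theta_formula (γ : ℕ → ℝ) {a b c : ℝ} (ha : nuF γ 1 = a) (hb : nuD1 γ 1 = b)
    (hc : nuD2 γ 1 = c) (hD : b ^ 2 < a * (b + c)) (u x : ℝ) :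
    Theta γ 1 u x = 1 / 2 + 1 / 2 * Real.log (c / b)
      - 1 / 2 * (((b + c) * u ^ 2 - 2 * b * u * x + a * x ^ 2) / (a * (b + c) - b ^ 2))
      + Omega (x / Real.sqrt c) := by
  unfold Theta SigmaQ
  simp only [one_pow, one_mul, ha, hb, hc]
  rw [Matrix.inv_def, Matrix.det_fin_two_of, Matrix.adjugate_fin_two_of]
  have h : a * (b + c) - b ^ 2 ≠ 0 := by linarith
  have h' : a * (c + b) - b * b = a * (b + c) - b ^ 2 := by ring
  rw [Ring.inverse_eq_inv', h']
  simp [Matrix.mulVec, dotProduct, Fin.sum_univ_two]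
  field_simp
  ring

lemma Theta_bound (γ : ℕ → ℝ) {a b c k : ℝ} (ha : nuF γ 1 = a) (hb : nuD1 γ 1 = b)
    (hc : nuD2 γ 1 = c) (hD : b ^ 2 < a * (b + c)) (hb0 : 0 < b) (hbc : b < c)
    (hk : 0 < k) (hck : c * k ^ 2 < 1)
    (hf : -Real.log b - 2 * Real.log k - 1 + 2 * a / b - a / (b ^ 2 * k ^ 2) + (b - a) * k ^ 2 = 0) :
    Theta γ 1 (-(a * (1 / (b * k) - k) + b * k)) (-(c * k + 1 / k)) = 0 ∧
    ∀ u x, Theta γ 1 u x ≤ (1 / (b * k) - k) * (u + (a * (1 / (b * k) - k) + b * k)) -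
      (1 / (2 * (b + c)) - 1 / (4 * c)) * (x + (c * k + 1 / k)) ^ 2 := by
  have hc0 : 0 < c := hb0.trans hbc
  have hs : 0 < Real.sqrt c := Real.sqrt_pos.2 hc0
  have hss : Real.sqrt c ^ 2 = c := Real.sq_sqrt hc0.le
  set n := Real.sqrt c * k with hn
  have hn0 : 0 < n := by positivity
  have hn2 : n ^ 2 = c * k ^ 2 := by rw [hn, mul_pow, hss]
  have hn1 : n < 1 := by nlinarith
  have hlogn : Real.log n = Real.log c / 2 + Real.log k := by
    rw [hn, Real.log_mul hs.ne' hk.ne', Real.log_sqrt hc0.le]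
  have hy : (c * k + 1 / k) / Real.sqrt c = n + n⁻¹ := by
    rw [hn]
    field_simp
    rw [hss]
    ring
  have hD0 : 0 < a * (b + c) - b ^ 2 := by linarith
  have hlog : Real.log (c / b) = Real.log c - Real.log b := Real.log_div hc0.ne' hb0.ne'
  set w := 1 / (b * k) - k with hw
  set D := a * (b + c) - b ^ 2 with hDdef
  set E := a * w + b * k with hE
  set X := c * k + 1 / k with hX
  have hX' : X = b * w + (b + c) * k := by
    rw [hX, hw]; field_simp; ring
  -- the quadratic form at the optimum
  have hQ0 : ((b + c) * E ^ 2 - 2 * b * E * X + a * X ^ 2) / D = E * w + X * k := by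
    rw [div_eq_iff hD0.ne', hE, hX', hDdef]; ring
  have hval : 1 / 2 + 1 / 2 * Real.log (c / b) - 1 / 2 * (E * w + X * k)
      + (n ^ 2 / 2 - Real.log n) = 0 := by
    rw [hlog, hlogn, hn2, hE, hX, hw]
    have : Real.log b = - 2 * Real.log k - 1 + 2 * a / b - a / (b ^ 2 * k ^ 2) + (b - a) * k ^ 2 := by
      linarith
    rw [this]
    field_simp
    ring
  have hQ : ∀ u x, ((b + c) * u ^ 2 - 2 * b * u * x + a * x ^ 2) / D =
      E * w + X * k - 2 * w * (u + E) - 2 * k * (x + X) +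
      ((x + X) ^ 2 / (b + c) + ((b + c) * (u + E) - b * (x + X)) ^ 2 / ((b + c) * D)) := by
    intro u x
    have e : ((b + c) * u ^ 2 - 2 * b * u * x + a * x ^ 2) =
      ((b + c) * E ^ 2 - 2 * b * E * X + a * X ^ 2) - 2 * w * D * (u + E) - 2 * k * D * (x + X) +
      ((b + c) * (u + E) ^ 2 - 2 * b * (u + E) * (x + X) + a * (x + X) ^ 2) := by
      rw [hE, hX', hDdef]; ring
    have e2 : ((b + c) * (u + E) ^ 2 - 2 * b * (u + E) * (x + X) + a * (x + X) ^ 2) / D =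
        (x + X) ^ 2 / (b + c) + ((b + c) * (u + E) - b * (x + X)) ^ 2 / ((b + c) * D) := by
      generalize u + E = p
      generalize x + X = r
      have : b + c ≠ 0 := by positivity
      field_simp
      rw [hDdef]
      ring
    rw [e, add_div, e2, sub_div, sub_div, hQ0]
    field_simp
  constructor
  · rw [Theta_formula γ ha hb hc hD, neg_div, hy, Omega_val hn0 hn1]
    rw [← hval, ← hQ0]
    ring
  · intro u x
    rw [Theta_formula γ ha hb hc hD, hQ]
    have hO := Omega_bound hn0 hn1 (x / Real.sqrt c)
    rw [← hy, ← add_div, div_pow, hss] at hO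
    have h1 : n * ((x + X) / Real.sqrt c) = k * (x + X) := by
      rw [hn]; field_simp
    rw [h1] at hO
    have h2 : 0 ≤ ((b + c) * (u + E) - b * (x + X)) ^ 2 / ((b + c) * D) := by positivity
    have h3 : (1 / (2 * (b + c)) - 1 / (4 * c)) * (x + X) ^ 2 =
      1 / 2 * ((x + X) ^ 2 / (b + c)) - (x + X) ^ 2 / c / 4 := by
      have : b + c ≠ 0 := by positivity
      field_simp
    rw [h3]
    linarith

lemma E0_x0_val (γ : ℕ → ℝ) {a b c k : ℝ} (ha : nuF γ 1 = a) (hb : nuD1 γ 1 = b)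
    (hc : nuD2 γ 1 = c) (hD : b ^ 2 < a * (b + c)) (hb0 : 0 < b) (hbc : b < c)
    (hk : 0 < k) (hck : c * k ^ 2 < 1)
    (hf : -Real.log b - 2 * Real.log k - 1 + 2 * a / b - a / (b ^ 2 * k ^ 2) + (b - a) * k ^ 2 = 0) :
    E0 γ = a * (1 / (b * k) - k) + b * k ∧ x0 γ = c * k + 1 / k := by
  obtain ⟨h0, hbd⟩ := Theta_bound γ ha hb hc hD hb0 hbc hk hck hf
  have hc0 : 0 < c := hb0.trans hbc
  have hw : 0 < 1 / (b * k) - k := by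
    have : 1 / (b * k) - k = (1 - b * k ^ 2) / (b * k) := by field_simp
    rw [this]
    have : b * k ^ 2 < 1 := lt_of_le_of_lt (by gcongr) hck
    apply div_pos (by linarith) (by positivity)
  have hκ : 0 < 1 / (2 * (b + c)) - 1 / (4 * c) := by
    rw [sub_pos]
    apply one_div_lt_one_div_of_lt <;> linarith
  set w := 1 / (b * k) - k
  set E := a * w + b * k
  set X := c * k + 1 / k
  set κ := 1 / (2 * (b + c)) - 1 / (4 * c)
  have hbd' : ∀ u x, Theta γ 1 u x ≤ w * (u + E) := fun u x => by
    have := hbd u x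
    have : 0 ≤ κ * (x + X) ^ 2 := by positivity
    linarith
  have hleast : IsLeast {E : ℝ | (⨆ x : ℝ, Theta γ 1 E x) = 0} (-E) := by
    constructor
    · show (⨆ x : ℝ, Theta γ 1 (-E) x) = 0
      apply le_antisymm
      · apply ciSup_le
        intro x
        simpa using hbd' (-E) x
      · rw [← h0]
        apply le_ciSup (f := fun x => Theta γ 1 (-E) x)
        exact ⟨w * (-E + E), by rintro _ ⟨x, rfl⟩; exact hbd' _ x⟩
    · intro u hu
      have hu' : (⨆ x : ℝ, Theta γ 1 u x) = 0 := hu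
      have : (⨆ x : ℝ, Theta γ 1 u x) ≤ w * (u + E) := ciSup_le (hbd' u)
      rw [hu'] at this
      have := nonneg_of_mul_nonneg_right this hw
      linarith
  have hE0 : E0 γ = E := by
    unfold E0; rw [hleast.csInf_eq, neg_neg]
  refine ⟨hE0, ?_⟩
  unfold x0
  have : {x : ℝ | ∀ y : ℝ, Theta γ 1 (-(E0 γ)) y ≤ Theta γ 1 (-(E0 γ)) x} = {-X} := by
    rw [hE0]
    ext x
    simp only [mem_ofPred_eq, mem_singleton_iff]
    constructor
    · intro h
      have h1 := h (-X)
      rw [h0] at h1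
      have h2 := hbd (-E) x
      have h3 : κ * (x + X) ^ 2 ≤ 0 := by
        have : w * (-E + E) = 0 := by ring
        linarith
      have h4 : (x + X) ^ 2 = 0 := le_antisymm (nonpos_of_mul_nonpos_right h3 hκ) (sq_nonneg _)
      have := pow_eq_zero_iff (two_ne_zero) |>.1 h4
      linarith
    · rintro rfl y
      rw [h0]
      simpa using hbd' (-E) y
  rw [this, csSup_singleton, neg_neg]

def PS (β : ℕ → ℝ) (x : ℝ) : ℝ := ∑' p : ℕ, β p * x ^ p

def shiftC (β : ℕ → ℝ) : ℕ → ℝ := fun p => ((p : ℝ) + 1) * β (p + 1)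

def Dec (R : ℝ) (β : ℕ → ℝ) : Prop := ∀ r, 0 < r → r < R → ∃ C, ∀ p, |β p| * r ^ p ≤ C

lemma Dec.summable_aux {R : ℝ} {β : ℕ → ℝ} (h : Dec R β) (k : ℕ) {r : ℝ} (h0 : 0 < r) (hr : r < R) :
    Summable (fun p : ℕ => (p : ℝ) ^ k * (|β p| * r ^ p)) := by
  obtain ⟨C, hC⟩ := h ((r + R) / 2) (by linarith) (by linarith)
  have hr' : 0 < (r + R) / 2 := by linarith
  have hx : ‖r / ((r + R) / 2)‖ < 1 := by
    rw [Real.norm_of_nonneg (by positivity), div_lt_one hr']; linarith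
  refine Summable.of_nonneg_of_le (fun p => by positivity) (fun p => ?_)
    ((summable_pow_mul_geometric_of_norm_lt_one k hx).mul_left C)
  rw [div_pow]
  have e : C * ((p : ℝ) ^ k * (r ^ p / ((r + R) / 2) ^ p)) -
    (p : ℝ) ^ k * (|β p| * r ^ p) = (p : ℝ) ^ k * (r ^ p / ((r + R) / 2) ^ p) *
      (C - |β p| * ((r + R) / 2) ^ p) := by
    field_simp
  have : 0 ≤ (p : ℝ) ^ k * (r ^ p / ((r + R) / 2) ^ p) *
      (C - |β p| * ((r + R) / 2) ^ p) := mul_nonneg (by positivity) (by linarith [hC p])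
  linarith

lemma Dec.shift {R : ℝ} {β : ℕ → ℝ} (h : Dec R β) : Dec R (shiftC β) := by
  intro r h0 hr
  have hs := h.summable_aux 1 h0 hr
  refine ⟨(∑' p : ℕ, (p : ℝ) ^ 1 * (|β p| * r ^ p)) / r, fun p => ?_⟩
  rw [le_div_iff₀ h0]
  have := hs.le_tsum (p + 1) (fun j _ => by positivity)
  refine le_trans (le_of_eq ?_) this
  unfold shiftC
  rw [abs_mul, abs_of_nonneg (by positivity : (0:ℝ) ≤ (p:ℝ) + 1)]
  push_cast
  ring

lemma Dec.summable {R : ℝ} {β : ℕ → ℝ} (h : Dec R β) {x : ℝ} (hx : |x| < R) :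
    Summable (fun p : ℕ => β p * x ^ p) := by
  obtain ⟨r, h1, h2⟩ := exists_between hx
  have h0 : 0 < r := lt_of_le_of_lt (abs_nonneg x) h1
  refine Summable.of_norm_bounded (h.summable_aux 0 h0 h2) (fun p => ?_)
  rw [norm_mul, norm_pow, Real.norm_eq_abs, Real.norm_eq_abs, pow_zero, one_mul]
  gcongr

lemma shift_tsum (β : ℕ → ℝ) (x : ℝ) (hs : Summable (fun p : ℕ => β p * ((p : ℝ) * x ^ (p - 1)))) :
    ∑' p : ℕ, β p * ((p : ℝ) * x ^ (p - 1)) = PS (shiftC β) x := by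
  rw [hs.tsum_eq_zero_add]
  unfold PS shiftC
  simp only [Nat.cast_zero, zero_mul, mul_zero, zero_add]
  refine tsum_congr fun p => ?_
  push_cast
  ring

lemma Dec.hasDerivAt {R : ℝ} {β : ℕ → ℝ} (h : Dec R β) {x : ℝ} (hx : |x| < R) :
    HasDerivAt (PS β) (PS (shiftC β) x) x := by
  obtain ⟨r, h1, h2⟩ := exists_between hx
  have h0 : 0 < r := lt_of_le_of_lt (abs_nonneg x) h1
  have hu : Summable (fun p : ℕ => (p : ℝ) ^ 1 * (|β p| * r ^ p) / r) :=
    (h.summable_aux 1 h0 h2).div_const r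
  have hbd : ∀ (n : ℕ) (y : ℝ), y ∈ Metric.ball (0:ℝ) r → ‖β n * ((n : ℝ) * y ^ (n - 1))‖ ≤
      (n : ℝ) ^ 1 * (|β n| * r ^ n) / r := by
    intro n y hy
    rw [Metric.mem_ball, dist_zero_right] at hy
    rcases n with _ | n
    · simp
    · rw [norm_mul, norm_mul, norm_pow, Real.norm_eq_abs, Real.norm_natCast, Nat.add_sub_cancel]
      have e : ((n + 1 : ℕ) : ℝ) ^ 1 * (|β (n + 1)| * r ^ (n + 1)) / r =
        |β (n + 1)| * (((n + 1 : ℕ) : ℝ) * r ^ n) := by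
        field_simp
        ring
      rw [e]
      gcongr
  have hmem : x ∈ Metric.ball (0:ℝ) r := by
    rw [Metric.mem_ball, dist_zero_right]; exact h1
  have := hasDerivAt_tsum_of_isPreconnected (g := fun (n : ℕ) y => β n * y ^ n) 
    (g' := fun (n : ℕ) y => β n * ((n : ℝ) * y ^ (n - 1))) hu Metric.isOpen_ball
    (convex_ball (0:ℝ) r).isPreconnected
    (fun n y _ => (hasDerivAt_pow n y).const_mul (β n)) hbd hmem (h.summable hx) hmem
  rw [shift_tsum β x (Summable.of_norm_bounded hu (fun n => hbd n x hmem))] at this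
  exact this

lemma Dec.hasStrictDerivAt {R : ℝ} {β : ℕ → ℝ} (h : Dec R β) {x : ℝ} (hx : |x| < R) :
    HasStrictDerivAt (PS β) (PS (shiftC β) x) x := by
  apply hasStrictDerivAt_of_hasDerivAt_of_continuousAt
  · have : ∀ᶠ y in nhds x, |y| < R := continuous_abs.continuousAt.eventually_lt continuousAt_const hx
    filter_upwards [this] with y hy
    exact h.hasDerivAt hy
  · exact (h.shift.hasDerivAt hx).continuousAt

def bet (γ : ℕ → ℝ) : ℕ → ℝ := fun p => if 2 ≤ p then γ p ^ 2 else 0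

lemma bet_dec {γ : ℕ → ℝ} (hγ : GammaDecay γ) : ∃ R > 1, Dec R (bet γ) := by
  obtain ⟨hpos, ρ, h0, h1, hev⟩ := hγ
  refine ⟨(ρ ^ 2)⁻¹, (one_lt_inv₀ (by positivity)).2 (by nlinarith), fun r hr hrR => ?_⟩
  have hb : IsBoundedUnder (· ≤ ·) atTop (fun p => |bet γ p| * r ^ p) := by
    refine ⟨1, ?_⟩
    rw [eventually_map]
    filter_upwards [hev] with p hp
    have hle : |bet γ p| ≤ (ρ ^ 2) ^ p := by
      unfold bet
      split_ifs
      · rw [abs_of_nonneg (by positivity), ← pow_mul, mul_comm 2 p, pow_mul]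
        have := hpos p
        gcongr
      · simp; positivity
    calc |bet γ p| * r ^ p ≤ (ρ ^ 2) ^ p * r ^ p := by gcongr
      _ = (ρ ^ 2 * r) ^ p := by rw [mul_pow]
      _ ≤ 1 := by
        apply pow_le_one₀ (by positivity)
        have : ρ ^ 2 * r < ρ ^ 2 * (ρ ^ 2)⁻¹ := by gcongr
        rw [mul_inv_cancel₀ (by positivity)] at this
        exact this.le
  obtain ⟨C, hC⟩ := hb.bddAbove_range
  exact ⟨C, fun p => hC ⟨p, rfl⟩⟩

lemma nuF_eq (γ : ℕ → ℝ) : nuF γ = PS (bet γ) := by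
  funext x
  refine tsum_congr fun p => ?_
  unfold bet; split_ifs <;> simp

lemma nuD1_eq (γ : ℕ → ℝ) : nuD1 γ = PS (shiftC (bet γ)) := by
  funext x
  have h2 := Function.Injective.tsum_eq (g := fun p : ℕ => p + 1) (add_left_injective 1)
    (f := fun p : ℕ => if 2 ≤ p then γ p ^ 2 * (p:ℝ) * x ^ (p - 1) else 0) (by
      intro p hp
      rcases p with _ | p
      · simp at hp
      · exact ⟨p, rfl⟩)
  refine h2.symm.trans (tsum_congr fun p => ?_)
  by_cases h : 1 ≤ p
  · have h' : 2 ≤ p + 1 := by omega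
    simp only [shiftC, bet, h', if_true, Nat.add_sub_cancel]
    push_cast; ring
  · have h' : ¬ 2 ≤ p + 1 := by omega
    simp only [shiftC, bet, h', if_false]
    ring

lemma nuD2_eq (γ : ℕ → ℝ) : nuD2 γ = PS (shiftC (shiftC (bet γ))) := by
  funext x
  have h2 := Function.Injective.tsum_eq (g := fun p : ℕ => p + 2) (add_left_injective 2)
    (f := fun p : ℕ => if 2 ≤ p then γ p ^ 2 * (p:ℝ) * ((p:ℝ) - 1) * x ^ (p - 2) else 0) (by
      intro p hp
      by_cases h : 2 ≤ p
      · exact ⟨p - 2, by simp [h]⟩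
      · simp [h] at hp)
  refine h2.symm.trans (tsum_congr fun p => ?_)
  have h' : 2 ≤ p + 2 := by omega
  simp only [shiftC, bet, h', if_true, Nat.add_sub_cancel]
  push_cast; ring

lemma scale0 (γ : ℕ → ℝ) (q : ℝ) : nuF (gammaScale γ q) 1 = nuF γ (q ^ 2) := by
  refine tsum_congr fun p => ?_
  unfold gammaScale
  split_ifs <;> ring

lemma scale1 (γ : ℕ → ℝ) (q : ℝ) : nuD1 (gammaScale γ q) 1 = q ^ 2 * nuD1 γ (q ^ 2) := by
  unfold nuD1
  rw [← tsum_mul_left]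
  refine tsum_congr fun p => ?_
  unfold gammaScale
  split_ifs with h
  · obtain ⟨j, rfl⟩ := Nat.exists_eq_add_of_le h
    rw [show 2 + j - 1 = j + 1 by omega]
    ring
  · simp

lemma scale2 (γ : ℕ → ℝ) (q : ℝ) : nuD2 (gammaScale γ q) 1 = q ^ 4 * nuD2 γ (q ^ 2) := by
  unfold nuD2
  rw [← tsum_mul_left]
  refine tsum_congr fun p => ?_
  unfold gammaScale
  split_ifs with h
  · obtain ⟨j, rfl⟩ := Nat.exists_eq_add_of_le h
    rw [show 2 + j - 2 = j by omega]
    ring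
  · simp

lemma base_ineq {γ : ℕ → ℝ} (hγ : GammaDecay γ) (hm : Mixed γ) (hn : nuF γ 1 = 1) :
    0 < nuD1 γ 1 ∧ nuD1 γ 1 < nuD2 γ 1 ∧ nuD1 γ 1 ^ 2 < nuD1 γ 1 + nuD2 γ 1 := by
  obtain ⟨R, hR, hdec⟩ := bet_dec hγ
  have s0 : Summable (bet γ) := by simpa using hdec.summable (x := 1) (by simpa using hR)
  have nn : ∀ p, 0 ≤ bet γ p := fun p => by unfold bet; split_ifs <;> positivity
  have s1 : Summable (fun p : ℕ => bet γ p * p) := by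
    have := hdec.summable_aux 1 one_pos hR
    refine this.congr fun p => ?_
    rw [abs_of_nonneg (nn p)]; ring
  have s2 : Summable (fun p : ℕ => bet γ p * p ^ 2) := by
    have := hdec.summable_aux 2 one_pos hR
    refine this.congr fun p => ?_
    rw [abs_of_nonneg (nn p)]; ring
  have h0 : HasSum (bet γ) 1 := by
    have : nuF γ 1 = ∑' p, bet γ p := tsum_congr fun p => by unfold bet; split_ifs <;> simp
    rw [← hn, this]; exact s0.hasSum
  have h1 : HasSum (fun p : ℕ => bet γ p * p) (nuD1 γ 1) := by
    have : nuD1 γ 1 = ∑' p : ℕ, bet γ p * p := tsum_congr fun p => by unfold bet; split_ifs <;> simp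
    rw [this]; exact s1.hasSum
  have h2 : HasSum (fun p : ℕ => bet γ p * p ^ 2 - bet γ p * p) (nuD2 γ 1) := by
    have : nuD2 γ 1 = ∑' p : ℕ, (bet γ p * p ^ 2 - bet γ p * p) := tsum_congr fun p => by
      unfold bet; split_ifs <;> simp; ring
    rw [this]; exact (s2.sub s1).hasSum
  set b := nuD1 γ 1
  set c := nuD2 γ 1
  obtain ⟨p, q, hp, hq, hpq, hgp, hgq⟩ := hm
  have bp : 0 < bet γ p := by unfold bet; rw [if_pos hp]; positivity
  have bq : 0 < bet γ q := by unfold bet; rw [if_pos hq]; positivity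
  have z : ∀ p, ¬ 2 ≤ p → bet γ p = 0 := fun p h => by unfold bet; rw [if_neg h]
  refine ⟨?_, ?_, ?_⟩
  · have : 0 < bet γ p * p := by positivity
    exact this.trans_le (le_hasSum h1 p (fun j _ => mul_nonneg (nn j) (by positivity)))
  · have h3 := h2.sub h1
    have nn3 : ∀ j : ℕ, 0 ≤ bet γ j * (j:ℝ) ^ 2 - bet γ j * j - bet γ j * j := by
      intro j
      by_cases hj : 2 ≤ j
      · have : (2:ℝ) ≤ j := by exact_mod_cast hj
        have := mul_nonneg (nn j) (mul_nonneg (by linarith : (0:ℝ) ≤ j) (by linarith : (0:ℝ) ≤ (j:ℝ) - 2))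
        nlinarith
      · rw [z j hj]; simp
    have pos3 : ∀ j : ℕ, 2 < j → 0 < bet γ j → 0 < c - b := by
      intro j hj hbj
      have hj' : (2:ℝ) < j := by exact_mod_cast hj
      have := mul_pos hbj (mul_pos (by linarith : (0:ℝ) < j) (by linarith : (0:ℝ) < (j:ℝ) - 2))
      have h4 := le_hasSum h3 j (fun i _ => nn3 i)
      nlinarith
    have : 0 < c - b := by
      rcases Nat.lt_or_ge 2 p with h | h
      · exact pos3 p h bp
      · exact pos3 q (by omega) bq
    linarith
  · have h3 : HasSum (fun j : ℕ => bet γ j * ((j:ℝ) - b) ^ 2) (c + b - b ^ 2) := by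
      have := ((h2.add h1).sub (h1.mul_left (2 * b))).add (h0.mul_left (b ^ 2))
      have e1 : c + b - 2 * b * b + b ^ 2 * 1 = c + b - b ^ 2 := by ring
      rw [e1] at this
      refine this.congr_fun fun j => ?_
      ring
    have pos3 : ∀ j : ℕ, (j:ℝ) ≠ b → 0 < bet γ j → 0 < c + b - b ^ 2 := by
      intro j hj hbj
      have h4 : (j:ℝ) - b ≠ 0 := sub_ne_zero.2 hj
      have h5 : 0 < bet γ j * ((j:ℝ) - b) ^ 2 := by positivity
      exact h5.trans_le (le_hasSum h3 j (fun i _ => mul_nonneg (nn i) (sq_nonneg _)))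
    have : 0 < c + b - b ^ 2 := by
      by_cases h : (p:ℝ) = b
      · refine pos3 q ?_ bq
        rw [← h]; exact_mod_cast hpq.symm
      · exact pos3 p h bp
    linarith

lemma exists_k {a b c : ℝ} (ha : 0 < a) (hb : 0 < b) (hbc : b < c)
    (hG : 0 < Real.log (c / b) - (a * c - a * b + b ^ 2) * (c - b) / (b ^ 2 * c)) :
    ∃ k : ℝ, 0 < k ∧ c * k ^ 2 < 1 ∧
      -Real.log b - 2 * Real.log k - 1 + 2 * a / b - a / (b ^ 2 * k ^ 2) + (b - a) * k ^ 2 = 0 := by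
  have hc : 0 < c := hb.trans hbc
  set h : ℝ → ℝ := fun τ => -Real.log b + Real.log τ - 1 + 2 * a / b - a / b ^ 2 * τ + (b - a) / τ with hh
  set A := a / b ^ 2 with hA
  have hA0 : 0 < A := by positivity
  set M := -Real.log b - 1 + 2 * a / b - 1 - Real.log (A / 2) + b / c with hM
  set T := c + 2 * |M| / A with hT
  have hcT : c ≤ T := by
    have : 0 ≤ 2 * |M| / A := by positivity
    linarith
  have hT0 : 0 < T := hc.trans_le hcT
  have h1 : 0 < h c := by
    have : h c = Real.log (c / b) - (a * c - a * b + b ^ 2) * (c - b) / (b ^ 2 * c) := by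
      simp only [hh, hA]
      rw [Real.log_div hc.ne' hb.ne']
      field_simp
      ring
    rw [this]; exact hG
  have h2 : h T < 0 := by
    have hl := Real.log_le_sub_one_of_pos (show 0 < A / 2 * T by positivity)
    rw [Real.log_mul (by positivity) hT0.ne'] at hl
    have h3 : (b - a) / T ≤ b / c := by gcongr; linarith
    have h4 : A * T = A * c + 2 * |M| := by rw [hT]; field_simp
    have h5 : M ≤ |M| := le_abs_self M
    have h6 : 0 < A * c := by positivity
    simp only [hh]
    linarith
  have hcont : ContinuousOn h (Icc c T) := by
    have hne : ∀ τ ∈ Icc c T, τ ≠ 0 := fun τ hτ => (hc.trans_le hτ.1).ne'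
    simp only [hh]
    have e1 : ContinuousOn (fun τ : ℝ => Real.log τ) (Icc c T) := continuousOn_id.log hne
    have e2 : ContinuousOn (fun τ : ℝ => (b - a) / τ) (Icc c T) := continuousOn_const.div continuousOn_id hne
    fun_prop
  obtain ⟨τ, ⟨hτ1, hτ2⟩, hτ⟩ := intermediate_value_Icc' hcT hcont ⟨h2.le, h1.le⟩
  have hτ3 : c < τ := lt_of_le_of_ne hτ1 (by rintro rfl; linarith)
  have hτ0 : 0 < τ := hc.trans hτ3
  have hs2 : (Real.sqrt τ)⁻¹ ^ 2 = τ⁻¹ := by rw [inv_pow, Real.sq_sqrt hτ0.le]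
  refine ⟨(Real.sqrt τ)⁻¹, inv_pos.2 (Real.sqrt_pos.2 hτ0), ?_, ?_⟩
  · rw [hs2, ← div_eq_mul_inv, div_lt_one hτ0]; exact hτ3
  · rw [hs2, Real.log_inv, Real.log_sqrt hτ0.le, ← hτ]
    simp only [hh, hA]
    field_simp
    ring

def ff (a b k : ℝ) : ℝ :=
  -Real.log b - 2 * Real.log k - 1 + 2 * a / b - a / (b ^ 2 * k ^ 2) + (b - a) * k ^ 2

lemma ff_strict {a b k : ℝ} (hb : 0 < b) (hk : 0 < k) : 
    ∃ L : ℝ × ℝ × ℝ →L[ℝ] ℝ, HasStrictFDerivAt (fun v : ℝ × ℝ × ℝ => ff v.1 v.2.1 v.2.2) L (a, b, k) := by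
  have : ContDiffAt ℝ 1 (fun v : ℝ × ℝ × ℝ => ff v.1 v.2.1 v.2.2) (a, b, k) := by
    unfold ff
    have hb' : ((a, b, k) : ℝ × ℝ × ℝ).2.1 ≠ 0 := hb.ne'
    have hk' : ((a, b, k) : ℝ × ℝ × ℝ).2.2 ≠ 0 := hk.ne'
    have c1 : ContDiffAt ℝ 1 (fun v : ℝ × ℝ × ℝ => v.1) (a, b, k) := by fun_prop
    have c2 : ContDiffAt ℝ 1 (fun v : ℝ × ℝ × ℝ => v.2.1) (a, b, k) := by fun_prop
    have c3 : ContDiffAt ℝ 1 (fun v : ℝ × ℝ × ℝ => v.2.2) (a, b, k) := by fun_prop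
    have c4 := c2.log hb'
    have c5 := c3.log hk'
    have c6 := (contDiffAt_const (c := (2:ℝ)).mul c1).div c2 hb'
    have c7 := c1.div ((c2.pow 2).mul (c3.pow 2)) (mul_ne_zero (pow_ne_zero 2 hb') (pow_ne_zero 2 hk'))
    have c8 := (c2.sub c1).mul (c3.pow 2)
    exact ((((c4.neg.sub (contDiffAt_const (c := (2:ℝ)).mul c5)).sub (contDiffAt_const (c := (1:ℝ)))).add c6).sub c7).add c8
  exact ⟨_, this.hasStrictFDerivAt one_ne_zero⟩

lemma ff_curve {α β κ : ℝ → ℝ} {a' b' k' t : ℝ} (hα : HasDerivAt α a' t) (hβ : HasDerivAt β b' t)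
    (hκ : HasDerivAt κ k' t) (hb : 0 < β t) (hk : 0 < κ t) :
    HasDerivAt (fun s => ff (α s) (β s) (κ s))
      ((2 / κ t) * (κ t ^ 2 - 1 / β t) * (β t - α t - α t / (β t * κ t ^ 2)) * k'
        + (2 / β t - 1 / (β t ^ 2 * κ t ^ 2) - κ t ^ 2) * a'
        + (-1 / β t - 2 * α t / β t ^ 2 + 2 * α t / (β t ^ 3 * κ t ^ 2) + κ t ^ 2) * b') t := by
  have c4 := hβ.log hb.ne'
  have c5 := (hκ.log hk.ne').const_mul 2
  have c6 := (hα.const_mul 2).div hβ hb.ne'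
  have c7 := hα.div ((hβ.pow 2).mul (hκ.pow 2)) (by simp; exact ⟨hb.ne', hk.ne'⟩)
  have c8 := (hβ.sub hα).mul (hκ.pow 2)
  have := ((((c4.neg.sub c5).sub_const 1).add c6).sub c7).add c8
  refine HasDerivAt.congr_deriv (f := fun s => ff (α s) (β s) (κ s)) this ?_
  simp
  field_simp
  ring

def fA (γ : ℕ → ℝ) (q : ℝ) : ℝ := nuF γ (q ^ 2)
def fB (γ : ℕ → ℝ) (q : ℝ) : ℝ := q ^ 2 * nuD1 γ (q ^ 2)
def fC (γ : ℕ → ℝ) (q : ℝ) : ℝ := q ^ 4 * nuD2 γ (q ^ 2)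

lemma strictABC {γ : ℕ → ℝ} {R q : ℝ} (hdec : Dec R (bet γ)) (hq0 : 0 < q) (hq : q ^ 2 < R) :
    HasStrictDerivAt (fA γ) (2 * fB γ q / q) q ∧
    HasStrictDerivAt (fB γ) (2 * (fB γ q + fC γ q) / q) q ∧ ContinuousAt (fC γ) q := by
  have hq' : |q ^ 2| < R := by rwa [abs_of_nonneg (by positivity)]
  have d : HasStrictDerivAt (fun q : ℝ => q ^ 2) (2 * q) q := by simpa using hasStrictDerivAt_pow 2 q
  have d0 := HasStrictDerivAt.comp q (h := fun q : ℝ => q ^ 2) (hdec.hasStrictDerivAt hq') d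
  have d1 := HasStrictDerivAt.comp q (h := fun q : ℝ => q ^ 2) (hdec.shift.hasStrictDerivAt hq') d
  have d2 := HasStrictDerivAt.comp q (h := fun q : ℝ => q ^ 2) (hdec.shift.shift.hasStrictDerivAt hq') d
  rw [← nuF_eq, ← nuD1_eq] at d0
  rw [← nuD1_eq, ← nuD2_eq] at d1
  rw [← nuD2_eq] at d2
  refine ⟨d0.congr_deriv ?_, (d.mul d1).congr_deriv ?_, ?_⟩
  · unfold fB; field_simp
  · unfold fB fC; simp; field_simp; 
  · exact (continuousAt_id.pow 4).mul d2.hasDerivAt.continuousAt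

def Good (γ : ℕ → ℝ) (R q : ℝ) : Prop :=
  (0 < q ∧ q ^ 2 < R) ∧ (0 < fA γ q ∧ 0 < fB γ q) ∧
  (fB γ q < fC γ q ∧ fB γ q ^ 2 < fA γ q * (fB γ q + fC γ q)) ∧ 
  0 < Real.log (fC γ q / fB γ q) - (fA γ q * fC γ q - fA γ q * fB γ q + fB γ q ^ 2) *
    (fC γ q - fB γ q) / (fB γ q ^ 2 * fC γ q)

lemma Good.evGood {γ : ℕ → ℝ} {R q : ℝ} (hdec : Dec R (bet γ)) (h : Good γ R q) :
    ∀ᶠ t in nhds q, Good γ R t := by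
  obtain ⟨⟨h1, h2⟩, ⟨h3, h4⟩, ⟨h5, h6⟩, h7⟩ := h
  obtain ⟨dA, dB, cC⟩ := strictABC hdec h1 h2
  have cA := dA.hasDerivAt.continuousAt
  have cB := dB.hasDerivAt.continuousAt
  have hc0 := h4.trans h5
  have cq : ContinuousAt (fun t : ℝ => t) q := continuousAt_id
  have z : ContinuousAt (fun _ : ℝ => (0:ℝ)) q := continuousAt_const
  refine ((z.eventually_lt cq h1).and ((cq.pow 2).eventually_lt continuousAt_const h2)).and
    (((z.eventually_lt cA h3).and (z.eventually_lt cB h4)).and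
    (((cB.eventually_lt cC h5).and ((cB.pow 2).eventually_lt (cA.mul (cB.add cC)) h6)).and ?_))
  refine z.eventually_lt (ContinuousAt.sub ((cC.div cB h4.ne').log (div_pos hc0 h4).ne') 
    (((((cA.mul cC).sub (cA.mul cB)).add (cB.pow 2)).mul (cC.sub cB)).div ((cB.pow 2).mul cC) 
      (mul_pos (pow_pos h4 2) hc0).ne')) h7

lemma Good.vals {γ : ℕ → ℝ} {R q k : ℝ} (h : Good γ R q) (hk : 0 < k) (hck : fC γ q * k ^ 2 < 1)
    (hf : ff (fA γ q) (fB γ q) k = 0) :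
    E0q γ q = fA γ q * (1 / (fB γ q * k) - k) + fB γ q * k ∧
    x0q γ q = q⁻¹ * (fC γ q * k + 1 / k) := by
  obtain ⟨⟨h1, h2⟩, ⟨h3, h4⟩, ⟨h5, h6⟩, h7⟩ := h
  obtain ⟨e1, e2⟩ := E0_x0_val (gammaScale γ q) (scale0 γ q) (scale1 γ q) (scale2 γ q) h6 h4 h5 hk hck hf
  refine ⟨e1, ?_⟩
  unfold x0q
  rw [e2]; rfl

lemma Good.deriv {γ : ℕ → ℝ} {R q : ℝ} (hdec : Dec R (bet γ)) (h : Good γ R q) :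
    HasDerivAt (fun t : ℝ => E0q γ t) (x0q γ q) q := by
  have hnh := h.evGood hdec
  have hgood := h
  obtain ⟨⟨h1, h2⟩, ⟨h3, h4⟩, ⟨h5, h6⟩, h7⟩ := h
  obtain ⟨dA, dB, cC⟩ := strictABC hdec h1 h2
  obtain ⟨k, hk, hck, hf⟩ := exists_k h3 h4 h5 h7
  have hf' : ff (fA γ q) (fB γ q) k = 0 := hf
  obtain ⟨-, hx0⟩ := hgood.vals hk hck hf'
  obtain ⟨L, hL⟩ := ff_strict (a := fA γ q) h4 hk
  have hc0 := h4.trans h5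
  -- inner map
  have dA' := dA.hasStrictFDerivAt.comp (q, k) (hasStrictFDerivAt_fst (𝕜 := ℝ) (E := ℝ) (F := ℝ) (p := (q, k)))
  have dB' := dB.hasStrictFDerivAt.comp (q, k) (hasStrictFDerivAt_fst (𝕜 := ℝ) (E := ℝ) (F := ℝ) (p := (q, k)))
  have dk' := hasStrictFDerivAt_snd (𝕜 := ℝ) (E := ℝ) (F := ℝ) (p := (q, k))
  have hin := dA'.prodMk (dB'.prodMk dk')
  obtain ⟨f', hf'd⟩ : ∃ f' : ℝ × ℝ →L[ℝ] ℝ,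
      HasStrictFDerivAt (fun v : ℝ × ℝ => ff (fA γ v.1) (fB γ v.1) v.2) f' (q, k) :=
    ⟨_, HasStrictFDerivAt.comp (q, k) (g := fun v : ℝ × ℝ × ℝ => ff v.1 v.2.1 v.2.2) hL hin⟩
  -- partial derivative in k
  have hEk : fB γ q - fA γ q - fA γ q / (fB γ q * k ^ 2) < 0 := by
    have e : fB γ q - fA γ q - fA γ q / (fB γ q * k ^ 2) =
      ((fB γ q - fA γ q) * fB γ q * k ^ 2 - fA γ q) / (fB γ q * k ^ 2) := by
      field_simp
    rw [e]
    apply div_neg_of_neg_of_pos _ (by positivity)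
    have hk2 : 0 < k ^ 2 := by positivity
    nlinarith [mul_pos hk2 (sub_pos.2 h6), mul_pos h3 (sub_pos.2 hck)]
  have hk2b : k ^ 2 - 1 / fB γ q < 0 := by
    rw [sub_neg, lt_div_iff₀ h4]
    nlinarith [mul_pos (pow_pos hk 2) (sub_pos.2 h5)]
  have hpart : f' (0, 1) ≠ 0 := by
    have g1 := ff_curve (hasDerivAt_const k (fA γ q)) (hasDerivAt_const k (fB γ q)) (hasDerivAt_id k) h4 hk
    have g2 := HasFDerivAt.comp_hasDerivAt k (f := fun s : ℝ => (q, s)) 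
      (l := fun v : ℝ × ℝ => ff (fA γ v.1) (fB γ v.1) v.2) hf'd.hasFDerivAt
      ((hasDerivAt_const k q).prodMk (hasDerivAt_id k))
    have := HasDerivAt.unique g2 g1
    rw [this]
    simp only [id, mul_one, mul_zero, add_zero]
    have := mul_pos_of_neg_of_neg hk2b hEk
    rw [mul_assoc]
    positivity
  have hinv : (f' ∘L .inr ℝ ℝ ℝ).IsInvertible := by
    refine ⟨ContinuousLinearEquiv.unitsEquivAut ℝ (Units.mk0 _ hpart), ?_⟩
    ext
    simp
  have hψ0 := (hf'd.eventually_apply_eq_iff_implicitFunctionOfProdDomain hinv).self_of_nhds.mp rfl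
  have hψd := (hf'd.hasStrictFDerivAt_implicitFunctionOfProdDomain hinv).hasFDerivAt.hasDerivAt
  have hψe := hf'd.eventually_apply_implicitFunctionOfProdDomain hinv
  set ψ := hf'd.implicitFunctionOfProdDomain hinv
  simp only [hf'] at hψ0 hψd hψe
  generalize (-(f' ∘L .inr ℝ ℝ ℝ).inverse ∘L (f' ∘L .inl ℝ ℝ ℝ)) 1 = k' at hψd
  have hψc := hψd.continuousAt
  have ev1 : ∀ᶠ t in nhds q, 0 < ψ t := continuousAt_const.eventually_lt hψc (by rw [hψ0]; exact hk)
  have ev2 : ∀ᶠ t in nhds q, fC γ t * ψ t ^ 2 < 1 := 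
    (cC.mul (hψc.pow 2)).eventually_lt continuousAt_const (by simp only [Pi.mul_apply, Pi.pow_apply]; rw [hψ0]; exact hck)
  have hEq : (fun t : ℝ => E0q γ t) =ᶠ[nhds q] 
      fun t => fA γ t * (1 / (fB γ t * ψ t) - ψ t) + fB γ t * ψ t := by
    filter_upwards [hnh, ev1, ev2, hψe] with t ht e1 e2 e3
    exact (ht.vals e1 e2 e3).1
  have hz := ff_curve dA.hasDerivAt dB.hasDerivAt hψd h4 (by rw [hψ0]; exact hk)
  have hz0 := hz.unique ((hasDerivAt_const q (0:ℝ)).congr_of_eventuallyEq hψe)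
  have hB := dB.hasDerivAt.mul hψd
  have hfin := (dA.hasDerivAt.mul (((hasDerivAt_const q (1:ℝ)).div hB (by
    simp only [Pi.mul_apply]; rw [hψ0]; positivity)).sub hψd)).add hB
  refine HasDerivAt.congr_of_eventuallyEq ?_ hEq
  refine hfin.congr_deriv ?_
  rw [hx0]
  simp only [Pi.mul_apply, Pi.sub_apply, Pi.div_apply]
  simp only [hψ0] at hz0 ⊢
  generalize fA γ q = a at *
  generalize fB γ q = b at *
  generalize fC γ q = c at *
  -- cancel the factor
  have hfac : (2 / k) * (k ^ 2 - 1 / b) ≠ 0 := mul_ne_zero (by positivity) hk2b.ne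
  have hS : (b - a - a / (b * k ^ 2)) * k' = q⁻¹ * (c * k + 1 / k) -
     ((1 / (b * k) - k) * (2 * b / q) + (k - a / (b ^ 2 * k)) * (2 * (b + c) / q)) := by
    apply mul_left_cancel₀ hfac
    have : (2 / k) * (k ^ 2 - 1 / b) * ((b - a - a / (b * k ^ 2)) * k') = 
      - ((2 / b - 1 / (b ^ 2 * k ^ 2) - k ^ 2) * (2 * b / q) + 
        (-1 / b - 2 * a / b ^ 2 + 2 * a / (b ^ 3 * k ^ 2) + k ^ 2) * (2 * (b + c) / q)) := by
      linarith
    rw [this]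
    field_simp
    ring
  have hS2 : q⁻¹ * (c * k + 1 / k) = (b - a - a / (b * k ^ 2)) * k' + 
     ((1 / (b * k) - k) * (2 * b / q) + (k - a / (b ^ 2 * k)) * (2 * (b + c) / q)) := by linarith
  rw [hS2]
  field_simp
  ring

/-- Under Condition M, q ↦ E₀(q) is differentiable near 1 with
derivative x₀(q). -/
theorem deriv_E0_eq_x0
    (γ : ℕ → ℝ) (hγ : GammaDecay γ) (hnorm : nuF γ 1 = 1) (hM : ConditionM γ) :
    ∃ δ > (0 : ℝ), ∀ q ∈ Set.Ioc (1 - δ) (1 : ℝ),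
      HasDerivAt (fun t : ℝ => E0q γ t) (x0q γ q) q := by
  obtain ⟨hmix, hpl, -⟩ := hM
  obtain ⟨R, hR, hdec⟩ := bet_dec hγ
  obtain ⟨i1, i2, i3⟩ := base_ineq hγ hmix hnorm
  have hG : Good γ R 1 := by
    unfold PureLike Gfun at hpl
    unfold Good fA fB fC
    simp only [one_pow, one_mul, hnorm] at *
    refine ⟨⟨one_pos, hR⟩, ⟨one_pos, i1⟩, ⟨i2, i3⟩, ?_⟩
    generalize nuD1 γ 1 = b at *
    generalize nuD2 γ 1 = c at *
    have hc : 0 < c := i1.trans i2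
    refine hpl.trans_le ?_
    have e : (c + b) * (c * 1 + b ^ 2 - b * 1) / (c * b ^ 2) - (c - b + b ^ 2) * (c - b) / (b ^ 2 * c)
      = 2 * b * (c - b + b ^ 2) / (b ^ 2 * c) := by
      field_simp
      ring
    have : 0 ≤ 2 * b * (c - b + b ^ 2) / (b ^ 2 * c) := by
      have : 0 < c - b := by linarith
      positivity
    linarith
  obtain ⟨δ, hδ, hball⟩ := Metric.eventually_nhds_iff.1 (hG.evGood hdec)
  refine ⟨δ, hδ, fun q hq => (hball ?_).deriv hdec⟩
  rw [Real.dist_eq, abs_lt]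
  constructor <;> linarith [hq.1, hq.2]

end SpinGlass
end
end
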